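/- arXiv:2502.03768 — 2 statements merged into one kernel-verified Lean document; each statement's English description precedes it below -/
import Mathlib

section
/- The product of B-operators with strictly descending indices applied to the pseudo-vacuum expands into double β-Grothendieck polynomials: B_{N−1}(σ_1) B_{N−2}(σ_2) ⋯ B_1(σ_{N−1}) |Ω⟩ = ∑_{w ∈ S_N} G^β_w(σ_1,…,σ_{N−1}; ⊖t_1,…,⊖t_{N−1}) |ω_N w^{−1}⟩, where ω_N ∈ S_N is the longest permutation. -/
noncomputable section
open scoped BigOperators

variable {F : Type*}

/-- `x ⊖ y := (x - y)/(1 + β·y)`. -/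
def om [Field F] (β x y : F) : F := (x - y) / (1 + β * y)

/-- `⊖ t := -t/(1 + β·t)`. -/
def negOm [Field F] (β t : F) : F := (-t) / (1 + β * t)

/-- The R-matrix `R^{(n)}(x,y)` on `V ⊗ V`, `V = F^n`, with entries
`R_{ij,kl} = (1 + [k<l]·β(x⊖y)) δ_{il} δ_{jk} + [k>l]·(x⊖y) δ_{ik} δ_{jl}`;
the row index is the pair `(i,j)`, the column index is the pair `(k,l)`. -/
def Rmat [Field F] (n : ℕ) (β x y : F) :
    Matrix (Fin n × Fin n) (Fin n × Fin n) F := Matrix.of fun p q =>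
  (if p.1 = q.2 ∧ p.2 = q.1 then (if q.1 < q.2 then 1 + β * om β x y else 1) else 0) +
  (if p.1 = q.1 ∧ p.2 = q.2 ∧ q.2 < q.1 then om β x y else 0)

/-- `R_{a i}(u, τ)` : the R-matrix acting on the auxiliary space (first factor)
and the `i`-th site of `H = (F^n)^{⊗N}`, identity elsewhere. -/
def Rsite [Field F] (n N : ℕ) (β u τ : F) (i : Fin N) :
    Matrix (Fin n × (Fin N → Fin n)) (Fin n × (Fin N → Fin n)) F := Matrix.of fun p q =>
  Rmat n β u τ (p.1, p.2 i) (q.1, q.2 i) *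
    (if ∀ j, j ≠ i → p.2 j = q.2 j then 1 else 0)

/-- The monodromy matrix `T_a(u) = R_{aN}(u,t_N) ⋯ R_{a1}(u,t_1)` on `V_a ⊗ H`. -/
def Tmono [Field F] (n N : ℕ) (β u : F) (t : Fin N → F) :
    Matrix (Fin n × (Fin N → Fin n)) (Fin n × (Fin N → Fin n)) F :=
  ((List.ofFn fun i : Fin N => Rsite n N β u (t i) i).reverse).prod

/-- The block `T_a(u)_{r c}` (with respect to the auxiliary space) as an operator on `H`. -/
def blockOp [Field F] (n N : ℕ) (β u : F) (t : Fin N → F) (r c : Fin n) :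
    Matrix (Fin N → Fin n) (Fin N → Fin n) F :=
  Matrix.of fun s s' => Tmono n N β u t (r, s) (c, s')

/-- The natural basis vector `|n_1,…,n_N⟩` of `H` (also used as a dual basis covector). -/
def ket [Field F] (n N : ℕ) (g : Fin N → Fin n) : (Fin N → Fin n) → F :=
  fun s => if s = g then 1 else 0

/-- The Coxeter length of a permutation: its number of inversions. -/
def permLength {N : ℕ} (w : Equiv.Perm (Fin N)) : ℕ :=
  (Finset.univ.filter fun p : Fin N × Fin N => p.1 < p.2 ∧ w p.2 < w p.1).card

/-- The longest permutation `ω_N : i ↦ N - 1 - i`. -/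
def omegaPerm (N : ℕ) : Equiv.Perm (Fin N) :=
  ⟨Fin.rev, Fin.rev, fun i => Fin.rev_rev i, fun i => Fin.rev_rev i⟩

/-- `IsGroth M β G` says that the family `G`, indexed by `S_{M+1}`, satisfies the
defining recursion of the double β-Grothendieck polynomials:
`G_{ω}(x;y) = ∏_{i+j ≤ M+1} (x_i + y_j + β x_i y_j)` (1-based indices), and
`G_{w s_i}(x;y) = ∂^β_i G_w(x;y)` whenever `ℓ(w s_i) = ℓ(w) - 1`
(the β-divided difference acting on the x-variables). -/
def IsGroth [Field F] (M : ℕ) (β : F)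
    (G : Equiv.Perm (Fin (M + 1)) → (Fin (M + 1) → F) → (Fin (M + 1) → F) → F) : Prop :=
  (∀ x y : Fin (M + 1) → F,
      G (omegaPerm (M + 1)) x y =
        ∏ p ∈ Finset.univ.filter
            (fun p : Fin (M + 1) × Fin (M + 1) => (p.1 : ℕ) + (p.2 : ℕ) + 2 ≤ M + 1),
          (x p.1 + y p.2 + β * x p.1 * y p.2)) ∧
  (∀ (w : Equiv.Perm (Fin (M + 1))) (i : Fin M) (x y : Fin (M + 1) → F),
      permLength (w * Equiv.swap i.castSucc i.succ) + 1 = permLength w →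
      x i.castSucc ≠ x i.succ →
      G (w * Equiv.swap i.castSucc i.succ) x y =
        ((1 + β * x i.succ) * G w x y -
            (1 + β * x i.castSucc) * G w (fun j => x (Equiv.swap i.castSucc i.succ j)) y) /
          (x i.castSucc - x i.succ))

/-- The product `B_{N-1}(σ_1) B_{N-2}(σ_2) ⋯ B_1(σ_{N-1})` for `n = N = M+2`. -/
def descB [Field F] (M : ℕ) (β : F) (t : Fin (M + 2) → F) (σ : Fin (M + 1) → F) :
    Matrix (Fin (M + 2) → Fin (M + 2)) (Fin (M + 2) → Fin (M + 2)) F :=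
  (List.ofFn fun a : Fin (M + 1) =>
      blockOp (M + 2) (M + 2) β (σ a) t 0 (Fin.rev a).succ).prod

/-!
By the Yang–Baxter equation, an operator on two neighbouring sites exchanges their parameters in the
monodromy matrix, and it fixes `|Ω⟩`. Read off on coefficients, the coefficient of a configuration
with sites `i`, `i + 1` transposed is therefore the β-divided difference, in the variables
`y = ⊖t`, of the coefficient of the original configuration. The Grothendieck polynomials obey the
same recursion in `y` under left multiplication by `s_i`, because divided differences in `x` and in
`y` commute. At the longest permutation the configuration is `0, 1, …, N - 1`, where each
`B`-operator must deposit its label straight at its final site, and both sides are the staircase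
product. Conservation of labels confines the vector to the span of the permutation configurations.
-/

section FormalGroupLaw

variable [Field F] {β : F}

lemma om_eq_add_mul_om {a b : F} (u : F) (ha : 1 + β * a ≠ 0) (hb : 1 + β * b ≠ 0) :
    om β u b = om β u a + om β a b + β * om β u a * om β a b := by
  grind [om]

lemma add_negOm_add_mul {t : F} (x : F) (ht : 1 + β * t ≠ 0) :
    x + negOm β t + β * x * negOm β t = om β x t := by
  grind [om, negOm]

lemma one_add_mul_negOm_mul_om {s t : F} (hs : 1 + β * s ≠ 0) (ht : 1 + β * t ≠ 0) :
    (1 + β * negOm β s) * om β s t = negOm β t - negOm β s := by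
  grind [om, negOm]

lemma negOm_injOn : Set.InjOn (negOm β) {t | 1 + β * t ≠ 0} := by
  intro s hs t ht h
  rw [negOm, negOm, div_eq_div_iff hs ht] at h
  linear_combination -h

end FormalGroupLaw

section Sites

variable [Field F] {n N : ℕ}

lemma Rsite_apply (β u τ : F) (i : Fin N) (a : Fin n) (g : Fin N → Fin n)
    (q : Fin n × (Fin N → Fin n)) :
    Rsite n N β u τ i (a, g) q =
      (if g i < a then 1 + β * om β u τ else 1) *
          (if q = (g i, Function.update g i a) then 1 else 0) +
        (if g i < a then om β u τ else 0) * (if q = (a, g) then 1 else 0) := by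
  obtain ⟨b, h⟩ := q
  have swapped_iff : (b, h) = (g i, Function.update g i a) ↔
      (a = h i ∧ g i = b) ∧ ∀ j, j ≠ i → g j = h j := by
    simp only [Prod.mk.injEq, Function.eq_update_iff]
    grind
  have fixed_iff : (b, h) = (a, g) ↔ (a = b ∧ g i = h i) ∧ ∀ j, j ≠ i → g j = h j := by
    simp only [Prod.mk.injEq, funext_iff]
    grind
  simp only [Rsite, Rmat, Matrix.of_apply, swapped_iff, fixed_iff]
  grind

lemma Rsite_mul_apply {κ : Type*} (β u τ : F) (i : Fin N) (a : Fin n) (g : Fin N → Fin n)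
    (X : Matrix (Fin n × (Fin N → Fin n)) κ F) (q : κ) :
    (Rsite n N β u τ i * X) (a, g) q =
      (if g i < a then 1 + β * om β u τ else 1) * X (g i, Function.update g i a) q +
        (if g i < a then om β u τ else 0) * X (a, g) q := by
  simp only [Matrix.mul_apply, Rsite_apply, add_mul _ (_ * _), Finset.sum_add_distrib, mul_assoc,
    ← Finset.mul_sum, boole_mul, Finset.sum_ite_eq', Finset.mem_univ, if_true]

lemma Tmono_eq_prod_map (β u : F) (t : Fin N → F) :
    Tmono n N β u t =
      ((List.finRange N).reverse.map fun i => Rsite n N β u (t i) i).prod := by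
  rw [Tmono, List.ofFn_eq_map, List.map_reverse]

end Sites

section Conservation

/-- The matrices whose nonzero entries connect only indices with the same value of the conserved
quantity `f`. -/
def conservingMatrices {ι κ : Type*} [Fintype ι] [DecidableEq ι] (R : Type*) [Semiring R]
    (f : ι → κ) : Submonoid (Matrix ι ι R) where
  carrier := {A | ∀ p q, A p q ≠ 0 → f p = f q}
  one_mem' p q h := congrArg f (by_contra fun hpq => h (Matrix.one_apply_ne hpq))
  mul_mem' {A B} hA hB p q h := by
    obtain ⟨r, -, hr⟩ := Finset.exists_ne_zero_of_sum_ne_zero h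
    exact (hA p r (left_ne_zero_of_mul hr)).trans (hB r q (right_ne_zero_of_mul hr))

/-- The multiset of labels occurring in a configuration of sites. -/
def content {ι α : Type*} [Fintype ι] (g : ι → α) : Multiset α := Finset.univ.val.map g

lemma cons_content_update {ι α : Type*} [Fintype ι] [DecidableEq ι] (g : ι → α) (i : ι) (a : α) :
    g i ::ₘ content (Function.update g i a) = a ::ₘ content g := by
  have hcons (h : ι → α) : content h = h i ::ₘ (Finset.univ.erase i).val.map h := by
    rw [content, ← Multiset.map_cons, Finset.erase_val,
      Multiset.cons_erase (Finset.mem_univ_val i)]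
  have hrest : (Finset.univ.erase i).val.map (Function.update g i a) =
      (Finset.univ.erase i).val.map g :=
    Multiset.map_congr rfl fun j hj =>
      Function.update_of_ne (Finset.ne_of_mem_erase (Finset.mem_val.mp hj)) ..
  rw [hcons, hcons g, hrest, Function.update_self, Multiset.cons_swap]

variable [Field F] {n N : ℕ}

lemma Rsite_mem_conservingMatrices (β u τ : F) (i : Fin N) :
    Rsite n N β u τ i ∈ conservingMatrices F fun p => p.1 ::ₘ content p.2 := by
  rintro ⟨a, g⟩ q hq
  rw [Rsite_apply] at hq
  by_cases hfixed : q = (a, g)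
  · rw [hfixed]
  · by_cases hswapped : q = (g i, Function.update g i a)
    · rw [hswapped]
      exact (cons_content_update g i a).symm
    · simp [hfixed, hswapped] at hq

lemma cons_content_of_blockOp_ne_zero {β u : F} {t : Fin N → F} {r c : Fin n}
    {g h : Fin N → Fin n} (hgh : blockOp n N β u t r c g h ≠ 0) :
    r ::ₘ content g = c ::ₘ content h := by
  have hT : Tmono n N β u t ∈ conservingMatrices F fun p => p.1 ::ₘ content p.2 := by
    rw [Tmono_eq_prod_map]
    exact Submonoid.list_prod_mem _ <| List.forall_mem_map.mpr fun i _ =>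
      Rsite_mem_conservingMatrices β u (t i) i
  exact hT (r, g) (c, h) hgh

end Conservation

section MonodromyRows

variable [Field F] {n N : ℕ} (β u : F) (t : Fin N → F)

lemma prod_Rsite_mul_apply_of_forall_eq {κ : Type*} {l : List (Fin N)} {a : Fin n}
    {g : Fin N → Fin n} (hg : ∀ i ∈ l, g i = a) (X : Matrix (Fin n × (Fin N → Fin n)) κ F)
    (q : κ) :
    ((l.map fun i => Rsite n N β u (t i) i).prod * X) (a, g) q = X (a, g) q := by
  induction l with
  | nil => simp
  | cons i l ih =>
    obtain ⟨hi, hl⟩ := List.forall_mem_cons.mp hg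
    have hupdate : Function.update g i a = g := by rw [← hi, Function.update_eq_self]
    rw [List.map_cons, List.prod_cons, Matrix.mul_assoc, Rsite_mul_apply, hi, hupdate, ih hl]
    simp

lemma prod_Rsite_apply_eq_zero {l : List (Fin N)} {a c : Fin n} {g : Fin N → Fin n}
    (ha : a ≠ c) (hg : ∀ i ∈ l, g i ≠ c) (h : Fin N → Fin n) :
    (l.map fun i => Rsite n N β u (t i) i).prod (a, g) (c, h) = 0 := by
  induction l generalizing a g with
  | nil => simp [ha]
  | cons i l ih =>
    obtain ⟨hi, hl⟩ := List.forall_mem_cons.mp hg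
    have hupdate : ∀ j ∈ l, Function.update g i a j ≠ c := by
      intro j hj
      rw [Function.update_apply]
      split_ifs
      exacts [ha, hl j hj]
    rw [List.map_cons, List.prod_cons, Rsite_mul_apply, ih hi hupdate, ih ha hl, mul_zero,
      mul_zero, add_zero]

/- Once the auxiliary line gives up the label `c` it never recovers it, so it must pass straight
through every site. -/
lemma prod_Rsite_apply_of_forall_lt {l : List (Fin N)} (hl : l.Nodup) {c : Fin n}
    {g : Fin N → Fin n} (hg : ∀ i ∈ l, g i < c) (h : Fin N → Fin n) :
    (l.map fun i => Rsite n N β u (t i) i).prod (c, g) (c, h) =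
      (l.map fun i => om β u (t i)).prod * ket n N g h := by
  induction l with
  | nil => simp [ket, Matrix.one_apply, eq_comm (a := g)]
  | cons i l ih =>
    obtain ⟨hil, hl⟩ := List.nodup_cons.mp hl
    obtain ⟨hi, hg⟩ := List.forall_mem_cons.mp hg
    have hupdate : ∀ j ∈ l, Function.update g i c j ≠ c := fun j hj => by
      rw [Function.update_of_ne (ne_of_mem_of_not_mem hj hil)]
      exact (hg j hj).ne
    rw [List.map_cons, List.prod_cons, Rsite_mul_apply,
      prod_Rsite_apply_eq_zero β u t hi.ne hupdate, ih hl hg, if_pos hi, if_pos hi,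
      List.map_cons, List.prod_cons]
    ring

lemma exists_reverse_finRange_eq_append (k : Fin N) : ∃ l₁ l₂ : List (Fin N),
    (List.finRange N).reverse = l₁ ++ k :: l₂ ∧ (∀ j ∈ l₁, k < j) ∧ l₂.Nodup ∧
      l₂.toFinset = Finset.Iio k := by
  obtain ⟨l₁, l₂, hl⟩ := List.append_of_mem (List.mem_reverse.mpr (List.mem_finRange k))
  have hsorted : (l₁ ++ k :: l₂).Pairwise (· > ·) :=
    hl ▸ List.pairwise_reverse.mpr (List.pairwise_lt_finRange N)
  obtain ⟨-, htail, hcross⟩ := List.pairwise_append.mp hsorted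
  obtain ⟨hlt, hl₂⟩ := List.pairwise_cons.mp htail
  have hgt : ∀ j ∈ l₁, k < j := fun j hj => hcross j hj k List.mem_cons_self
  refine ⟨l₁, l₂, hl, hgt, hl₂.imp ne_of_gt, Finset.ext fun j => ?_⟩
  have hj : j ∈ l₁ ++ k :: l₂ := hl ▸ List.mem_reverse.mpr (List.mem_finRange j)
  rw [List.mem_toFinset, Finset.mem_Iio]
  refine ⟨hlt j, fun hjk => ?_⟩
  rcases List.mem_append.mp hj with hj | hj
  · exact absurd hjk (hgt j hj).not_gt
  · exact (List.mem_cons.mp hj).resolve_left hjk.ne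

lemma blockOp_apply_of_step {r c : Fin n} (hrc : r ≤ c) {k : Fin N} {g : Fin N → Fin n}
    (hlt : ∀ j < k, g j < c) (hk : g k = c) (hgt : ∀ j > k, g j = r) (h : Fin N → Fin n) :
    blockOp n N β u t r c g h =
      (∏ j ∈ Finset.Iio k, om β u (t j)) * ket n N (Function.update g k r) h := by
  obtain ⟨l₁, l₂, hl, hl₁, hnodup, hl₂⟩ := exists_reverse_finRange_eq_append k
  have hbelow : ∀ j ∈ l₂, Function.update g k r j < c := fun j hj => by
    have hjk : j < k := Finset.mem_Iio.mp (hl₂ ▸ List.mem_toFinset.mpr hj)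
    rw [Function.update_of_ne hjk.ne]
    exact hlt j hjk
  rw [blockOp, Matrix.of_apply, Tmono_eq_prod_map, hl, List.map_append, List.prod_append,
    prod_Rsite_mul_apply_of_forall_eq β u t fun j hj => hgt j (hl₁ j hj), List.map_cons,
    List.prod_cons, Rsite_mul_apply, hk, if_neg hrc.not_gt, if_neg hrc.not_gt, one_mul, zero_mul,
    add_zero, prod_Rsite_apply_of_forall_lt β u t hnodup hbelow, ← hl₂,
    List.prod_toFinset _ hnodup]

end MonodromyRows

section Semiconj

variable {M : Type*} [Monoid M] {a : M}

lemma semiconjBy_list_prod_map {ι : Type*} {l : List ι} {f f' : ι → M}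
    (h : ∀ i ∈ l, SemiconjBy a (f i) (f' i)) :
    SemiconjBy a (l.map f).prod (l.map f').prod := by
  induction l with
  | nil => exact SemiconjBy.one_right a
  | cons i l ih =>
    obtain ⟨hi, hl⟩ := List.forall_mem_cons.mp h
    simpa only [List.map_cons, List.prod_cons] using hi.mul_right (ih hl)

lemma semiconjBy_prod_reverse_finRange {N : ℕ} {f f' : Fin (N + 1) → M} (i : Fin N)
    (hpair : SemiconjBy a (f i.succ * f i.castSucc) (f' i.succ * f' i.castSucc))
    (hrest : ∀ k, k ≠ i.castSucc → k ≠ i.succ → SemiconjBy a (f k) (f' k)) :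
    SemiconjBy a ((List.finRange (N + 1)).reverse.map f).prod
      ((List.finRange (N + 1)).reverse.map f').prod := by
  have prod_succ {m : ℕ} (e : Fin (m + 1) → M) :
      ((List.finRange (m + 1)).reverse.map e).prod =
        e (Fin.last m) * ((List.finRange m).reverse.map (e ∘ Fin.castSucc)).prod := by
    simp [List.finRange_succ_last, ← List.map_reverse]
  induction N with
  | zero => exact i.elim0
  | succ N ih =>
    rw [prod_succ f, prod_succ f']
    induction i using Fin.lastCases with
    | last =>
      rw [prod_succ (f ∘ _), prod_succ (f' ∘ _), ← mul_assoc, ← mul_assoc]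
      rw [Fin.succ_last] at hpair hrest
      exact hpair.mul_right <| semiconjBy_list_prod_map fun k _ => hrest k.castSucc.castSucc
        (by simp) (Fin.castSucc_ne_last _)
    | cast i =>
      refine SemiconjBy.mul_right (hrest _ (Fin.castSucc_ne_last _).symm ?_) (ih i ?_ ?_)
      · rw [Fin.succ_castSucc]
        exact (Fin.castSucc_ne_last _).symm
      · simpa only [Function.comp_apply, Fin.succ_castSucc] using hpair
      · intro k hk hk'
        exact hrest _ (by simpa using hk)
          (by simpa only [Fin.succ_castSucc, ne_eq, Fin.castSucc_inj] using hk')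

end Semiconj

section KroneckerBlocks

open scoped Kronecker

variable {R ι κ : Type*} [Semiring R] [Fintype ι] [DecidableEq ι] [Fintype κ]

lemma one_kronecker_mul_apply {μ : Type*} (A : Matrix κ κ R) (X : Matrix (ι × κ) μ R)
    (a : ι) (g : κ) (q : μ) :
    (((1 : Matrix ι ι R) ⊗ₖ A) * X) (a, g) q = ∑ h, A g h * X (a, h) q := by
  simp [Matrix.mul_apply, Fintype.sum_prod_type, Matrix.one_apply, ite_mul]

lemma mul_one_kronecker_apply {μ : Type*} (A : Matrix κ κ R) (X : Matrix μ (ι × κ) R)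
    (p : μ) (b : ι) (h : κ) :
    (X * ((1 : Matrix ι ι R) ⊗ₖ A)) p (b, h) = ∑ g, X p (b, g) * A g h := by
  rw [Matrix.mul_apply, Fintype.sum_prod_type, Finset.sum_comm]
  simp [Matrix.one_apply, ite_mul]

end KroneckerBlocks

lemma update_update_comp_swap {ι α : Type*} [DecidableEq ι] {i j : ι} (hij : i ≠ j) (g : ι → α)
    (x y : α) :
    Function.update (Function.update g j y) i x ∘ Equiv.swap i j =
      Function.update (Function.update g j x) i y := by
  rw [Equiv.comp_swap_eq_update, Function.update_self, Function.update_of_ne hij.symm,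
    Function.update_self, Function.update_comm hij, Function.update_idem, Function.update_idem]

section SiteExchange

open scoped Kronecker Matrix

variable [Field F] {n N : ℕ}

/-- The operator on `H` that intertwines the monodromy matrices before and after the parameters of
two neighbouring sites `i` and `j` are exchanged; `v` stands for `t_i ⊖ t_j`. It is the R-matrix of
these two sites composed with their transposition. -/
def siteExchange (n : ℕ) (β v : F) (i j : Fin N) :
    Matrix (Fin N → Fin n) (Fin N → Fin n) F := Matrix.of fun g h =>
  (if g i < g j then 1 + β * v else 1) * ket n N g h +
    (if g i < g j then v else 0) * ket n N (g ∘ Equiv.swap i j) h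

lemma sum_siteExchange_mul (β v : F) (i j : Fin N) (g : Fin N → Fin n)
    (φ : (Fin N → Fin n) → F) :
    ∑ h, siteExchange n β v i j g h * φ h =
      (if g i < g j then 1 + β * v else 1) * φ g +
        (if g i < g j then v else 0) * φ (g ∘ Equiv.swap i j) := by
  simp only [siteExchange, ket, Matrix.of_apply, add_mul _ (_ * _), Finset.sum_add_distrib,
    mul_assoc, ← Finset.mul_sum, boole_mul, Finset.sum_ite_eq', Finset.mem_univ, if_true]

lemma siteExchange_mulVec_ket_const (β v : F) (i j : Fin N) (r : Fin n) :
    siteExchange n β v i j *ᵥ ket n N (fun _ => r) = ket n N fun _ => r := by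
  funext g
  have hswap : g ∘ Equiv.swap i j = (fun _ => r) ↔ g = fun _ => r :=
    (Equiv.swap i j).surjective.injective_comp_right.eq_iff' rfl
  refine (sum_siteExchange_mul β v i j g _).trans ?_
  simp only [ket, hswap]
  by_cases hg : g = fun _ => r
  · simp [hg]
  · simp [hg]

lemma siteExchange_semiconjBy_Rsite (β v u τ : F) {i j k : Fin N} (hi : k ≠ i) (hj : k ≠ j) :
    SemiconjBy (1 ⊗ₖ siteExchange n β v i j) (Rsite n N β u τ k) (Rsite n N β u τ k) := by
  have hk : Equiv.swap i j k = k := Equiv.swap_apply_of_ne_of_ne hi hj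
  have hupdate (g : Fin N → Fin n) (a : Fin n) : Function.update (g ∘ Equiv.swap i j) k a =
      Function.update g k a ∘ Equiv.swap i j := by
    rw [Function.update_comp_equiv, Equiv.symm_swap, hk]
  suffices ∀ X : Matrix (Fin n × (Fin N → Fin n)) (Fin n × (Fin N → Fin n)) F,
      (1 ⊗ₖ siteExchange n β v i j) * (Rsite n N β u τ k * X) =
        Rsite n N β u τ k * ((1 ⊗ₖ siteExchange n β v i j) * X) by
    simpa only [SemiconjBy, mul_one] using this 1
  intro X
  ext ⟨a, g⟩ q
  simp only [one_kronecker_mul_apply, sum_siteExchange_mul, Rsite_mul_apply, Function.comp_apply,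
    hk, hupdate, Function.update_of_ne hi.symm, Function.update_of_ne hj.symm]
  ring

/- The Yang–Baxter equation. Each entry depends only on the relative order of the label `c` on the
auxiliary line and the labels `x`, `y` on the two sites. -/
lemma siteExchange_semiconjBy_Rsite_mul_Rsite {β a b : F} (u : F) (ha : 1 + β * a ≠ 0)
    (hb : 1 + β * b ≠ 0) {i j : Fin N} (hij : i ≠ j) :
    SemiconjBy (1 ⊗ₖ siteExchange n β (om β a b) i j)
      (Rsite n N β u b j * Rsite n N β u a i) (Rsite n N β u a j * Rsite n N β u b i) := by
  suffices ∀ X : Matrix (Fin n × (Fin N → Fin n)) (Fin n × (Fin N → Fin n)) F,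
      (1 ⊗ₖ siteExchange n β (om β a b) i j) * (Rsite n N β u b j * (Rsite n N β u a i * X)) =
        Rsite n N β u a j * (Rsite n N β u b i * ((1 ⊗ₖ siteExchange n β (om β a b) i j) * X)) by
    simpa only [SemiconjBy, mul_one, mul_assoc] using this 1
  intro X
  ext ⟨c, g⟩ q
  have hg : g = Function.update (Function.update g j (g j)) i (g i) := by simp
  rw [hg]
  generalize g i = x, g j = y
  have update_second (x y z : Fin n) :
      Function.update (Function.update (Function.update g j y) i x) j z =
        Function.update (Function.update g j z) i x := by
    rw [Function.update_comm hij, Function.update_idem]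
  simp only [one_kronecker_mul_apply, sum_siteExchange_mul, Rsite_mul_apply,
    update_update_comp_swap hij, update_second, Function.update_self, Function.update_idem,
    Function.update_of_ne hij.symm, om_eq_add_mul_om u ha hb]
  generalize om β a b = v, om β u a = w
  clear update_second hg ha hb
  rcases lt_trichotomy x y with hxy | hxy | hxy <;>
    rcases lt_trichotomy x c with hxc | hxc | hxc <;>
    rcases lt_trichotomy y c with hyc | hyc | hyc
  all_goals first
    | (exfalso; order)
    | (try subst hxy
       try subst hxc
       try subst hyc
       simp only [*, lt_irrefl, not_lt_of_gt, if_true, if_false] <;> ring)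

lemma siteExchange_semiconjBy_Tmono {β : F} (u : F) {t : Fin (N + 1) → F}
    (ht : ∀ k, 1 + β * t k ≠ 0) (i : Fin N) :
    SemiconjBy (1 ⊗ₖ siteExchange n β (om β (t i.castSucc) (t i.succ)) i.castSucc i.succ)
      (Tmono n (N + 1) β u t)
      (Tmono n (N + 1) β u (t ∘ Equiv.swap i.castSucc i.succ)) := by
  rw [Tmono_eq_prod_map, Tmono_eq_prod_map]
  refine semiconjBy_prod_reverse_finRange i ?_ fun k hk hk' => ?_
  · simpa using siteExchange_semiconjBy_Rsite_mul_Rsite u (ht i.castSucc) (ht i.succ)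
      Fin.castSucc_lt_succ.ne
  · simpa [Equiv.swap_apply_of_ne_of_ne hk hk'] using
      siteExchange_semiconjBy_Rsite β _ u (t k) hk hk'

lemma siteExchange_semiconjBy_blockOp {β : F} (u : F) {t : Fin (N + 1) → F}
    (ht : ∀ k, 1 + β * t k ≠ 0) (i : Fin N) (r c : Fin n) :
    SemiconjBy (siteExchange n β (om β (t i.castSucc) (t i.succ)) i.castSucc i.succ)
      (blockOp n (N + 1) β u t r c)
      (blockOp n (N + 1) β u (t ∘ Equiv.swap i.castSucc i.succ) r c) := by
  ext g h
  have hT := congrFun₂ (siteExchange_semiconjBy_Tmono u ht i).eq (r, g) (c, h)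
  rwa [one_kronecker_mul_apply, mul_one_kronecker_apply] at hT

end SiteExchange

section BetheVectors

open scoped Matrix

variable [Field F] {n N m : ℕ}

/-- The off-shell Bethe vector `T(u_1)_{r c_1} ⋯ T(u_m)_{r c_m} |r,…,r⟩`. -/
def betheVector (β : F) (t : Fin N → F) (r : Fin n) (u : Fin m → F) (c : Fin m → Fin n) :
    (Fin N → Fin n) → F :=
  (List.ofFn fun a => blockOp n N β (u a) t r (c a)).prod *ᵥ ket n N fun _ => r

lemma betheVector_succ (β : F) (t : Fin N → F) (r : Fin n) (u : Fin (m + 1) → F)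
    (c : Fin (m + 1) → Fin n) :
    betheVector β t r u c =
      blockOp n N β (u 0) t r (c 0) *ᵥ betheVector β t r (Fin.tail u) (Fin.tail c) := by
  rw [betheVector, List.ofFn_succ, List.prod_cons, ← Matrix.mulVec_mulVec]
  rfl

lemma siteExchange_mulVec_betheVector {β : F} {t : Fin (N + 1) → F} (ht : ∀ k, 1 + β * t k ≠ 0)
    (i : Fin N) (r : Fin n) (u : Fin m → F) (c : Fin m → Fin n) :
    siteExchange n β (om β (t i.castSucc) (t i.succ)) i.castSucc i.succ *ᵥ betheVector β t r u c =
      betheVector β (t ∘ Equiv.swap i.castSucc i.succ) r u c := by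
  rw [betheVector, betheVector, Matrix.mulVec_mulVec, List.ofFn_eq_map, List.ofFn_eq_map,
    (semiconjBy_list_prod_map fun a _ =>
      siteExchange_semiconjBy_blockOp (u a) ht i r (c a)).eq,
    ← Matrix.mulVec_mulVec, siteExchange_mulVec_ket_const]

lemma content_add_replicate_of_betheVector_ne_zero {β : F} {t : Fin N → F} {r : Fin n}
    {u : Fin m → F} {c : Fin m → Fin n} {g : Fin N → Fin n} (hg : betheVector β t r u c g ≠ 0) :
    content g + Multiset.replicate m r = Multiset.replicate N r + content c := by
  induction m generalizing g with
  | zero =>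
    have hconst : g = fun _ => r := by
      by_contra h
      simp [betheVector, ket, h] at hg
    simp [hconst, content]
  | succ m ih =>
    rw [betheVector_succ] at hg
    obtain ⟨h, -, hh⟩ := Finset.exists_ne_zero_of_sum_ne_zero hg
    have hblock := cons_content_of_blockOp_ne_zero (left_ne_zero_of_mul hh)
    have htail := ih (right_ne_zero_of_mul hh)
    have hc : content c = c 0 ::ₘ content (Fin.tail c) := by
      rw [content, Fin.univ_succ, Finset.cons_val, Finset.map_val, Multiset.map_cons,
        Multiset.map_map]
      rfl
    rw [Multiset.replicate_succ, Multiset.add_cons, ← Multiset.cons_add, hblock,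
      Multiset.cons_add, htail, hc, Multiset.add_cons]

lemma injective_of_betheVector_ne_zero {β : F} {t : Fin (m + 1) → F} {r : Fin n} {u : Fin m → F}
    {c : Fin m → Fin n} (hc : Function.Injective c) (hr : ∀ a, c a ≠ r) {g : Fin (m + 1) → Fin n}
    (hg : betheVector β t r u c g ≠ 0) : Function.Injective g := by
  have hcontent : content g = r ::ₘ content c := by
    have h := content_add_replicate_of_betheVector_ne_zero hg
    rw [Multiset.replicate_succ, Multiset.cons_add, add_comm, ← Multiset.add_cons] at h
    exact add_left_cancel h
  have hnodup : (content g).Nodup := by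
    rw [hcontent, Multiset.nodup_cons]
    exact ⟨by simpa [content] using hr, Finset.univ.nodup.map hc⟩
  intro i j hij
  exact Multiset.inj_on_of_nodup_map hnodup i (Finset.mem_univ_val i) j (Finset.mem_univ_val j) hij

/-- The configuration `0, 1, …, m, 0, …, 0`. -/
def ramp (N m : ℕ) : Fin (N + 1) → Fin (N + 1) := fun j => if (j : ℕ) ≤ m then j else 0

lemma update_ramp_succ {k : Fin (N + 1)} (hk : (k : ℕ) = m + 1) :
    Function.update (ramp N (m + 1)) k 0 = ramp N m := by
  funext j
  rw [Function.update_apply]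
  grind [ramp]

lemma betheVector_ramp (β : F) (t : Fin (N + 1) → F) (u : Fin m → F) {c : Fin m → Fin (N + 1)}
    (hc : ∀ a, (c a : ℕ) + a = m) :
    betheVector β t 0 u c (ramp N m) =
      ∏ a : Fin m, ∏ j ∈ {j : Fin (N + 1) | (j : ℕ) + a < m}, om β (u a) (t j) := by
  induction m with
  | zero =>
    have hramp : ramp N 0 = fun _ => 0 := by
      funext j
      simp [ramp]
    simp [betheVector, hramp, ket]
  | succ m ih =>
    have hc0 : (c 0 : ℕ) = m + 1 := hc 0
    have hblock := blockOp_apply_of_step β (u 0) t (Fin.zero_le (c 0)) (k := c 0)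
      (g := ramp N (m + 1)) (fun j hj => by grind [ramp]) (by grind [ramp])
      (fun j hj => by grind [ramp])
    have hIio : Finset.Iio (c 0) =
        ({j | (j : ℕ) + (0 : Fin (m + 1)) < m + 1} : Finset (Fin (N + 1))) := by
      ext j
      simp [Fin.lt_def, hc0]
    rw [betheVector_succ, Matrix.mulVec, dotProduct, Fin.prod_univ_succ, ← hIio]
    simp only [hblock, update_ramp_succ hc0, ket, mul_assoc, boole_mul, ← Finset.mul_sum,
      Finset.sum_ite_eq', Finset.mem_univ, if_true, Fin.val_succ, ← add_assoc,
      Nat.add_lt_add_iff_right]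
    rw [ih (Fin.tail u) (c := Fin.tail c) fun a => Nat.succ.inj (hc a.succ)]
    rfl

end BetheVectors

section Permutations

variable {M : ℕ}

lemma swap_castSucc_succ_lt {i : Fin M} {a b : Fin (M + 1)} (hab : a < b)
    (hne : (a, b) ≠ (i.castSucc, i.succ)) :
    Equiv.swap i.castSucc i.succ a < Equiv.swap i.castSucc i.succ b := by
  grind

lemma swap_mul_castSucc_lt_swap_mul_succ {w : Equiv.Perm (Fin (M + 1))} {i j : Fin M}
    (hi : w⁻¹ i.succ < w⁻¹ i.castSucc) (hj : w j.castSucc < w j.succ) :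
    (Equiv.swap i.castSucc i.succ * w) j.castSucc <
      (Equiv.swap i.castSucc i.succ * w) j.succ := by
  refine swap_castSucc_succ_lt hj fun h => ?_
  obtain ⟨hfst, hsnd⟩ := Prod.mk.inj h
  rw [← hfst, ← hsnd, ← Equiv.Perm.mul_apply, ← Equiv.Perm.mul_apply, inv_mul_cancel] at hi
  exact hi.not_gt Fin.castSucc_lt_succ

lemma mul_swap_inv_succ_lt_mul_swap_inv_castSucc {w : Equiv.Perm (Fin (M + 1))} {i j : Fin M}
    (hi : w⁻¹ i.succ < w⁻¹ i.castSucc) (hj : w j.castSucc < w j.succ) :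
    (w * Equiv.swap j.castSucc j.succ)⁻¹ i.succ <
      (w * Equiv.swap j.castSucc j.succ)⁻¹ i.castSucc := by
  rw [mul_inv_rev, Equiv.swap_inv]
  refine swap_castSucc_succ_lt hi fun h => ?_
  obtain ⟨hfst, hsnd⟩ := Prod.mk.inj h
  rw [← hfst, ← hsnd, ← Equiv.Perm.mul_apply, ← Equiv.Perm.mul_apply, mul_inv_cancel] at hj
  exact hj.not_gt Fin.castSucc_lt_succ

lemma permLength_mul_swap_of_lt {w : Equiv.Perm (Fin (M + 1))} {i : Fin M}
    (hi : w i.castSucc < w i.succ) :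
    permLength (w * Equiv.swap i.castSucc i.succ) = permLength w + 1 := by
  set s := Equiv.swap i.castSucc i.succ with hs
  have hss (a : Fin (M + 1)) : s (s a) = a := Equiv.swap_apply_self _ _ a
  have hmem : (i.castSucc, i.succ) ∈ ({p | p.1 < p.2 ∧ (w * s) p.2 < (w * s) p.1} :
      Finset (Fin (M + 1) × Fin (M + 1))) := by
    simpa [hs] using hi
  rw [permLength, ← Finset.card_erase_add_one hmem, permLength]
  refine congrArg (· + 1) (Finset.card_equiv (s.prodCongr s) ?_)
  rintro ⟨a, b⟩
  rw [Finset.mem_erase, Finset.mem_filter_univ, Finset.mem_filter_univ]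
  simp only [Equiv.prodCongr_apply, Prod.map_apply, Equiv.Perm.mul_apply]
  constructor
  · rintro ⟨hne, hab, hinv⟩
    exact ⟨swap_castSucc_succ_lt hab hne, hinv⟩
  · rintro ⟨hab, hinv⟩
    have hne : (s a, s b) ≠ (i.castSucc, i.succ) := by
      rintro h
      obtain ⟨ha, hb⟩ := Prod.mk.inj h
      exact hi.not_gt (ha ▸ hb ▸ hinv)
    have hab' : s (s a) < s (s b) := swap_castSucc_succ_lt hab hne
    rw [hss, hss] at hab'
    refine ⟨?_, hab', hinv⟩
    rintro ⟨⟩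
    simp [hs, Fin.castSucc_lt_succ.not_gt] at hab

lemma exists_castSucc_lt_succ_of_ne_omegaPerm {w : Equiv.Perm (Fin (M + 1))}
    (hw : w ≠ omegaPerm (M + 1)) : ∃ i : Fin M, w i.castSucc < w i.succ := by
  by_contra! hdesc
  have hanti : StrictAnti w := Fin.strictAnti_iff_succ_lt.mpr fun i =>
    (hdesc i).lt_of_ne (w.injective.ne Fin.castSucc_lt_succ.ne')
  refine hw (DFunLike.coe_injective ((hanti.range_inj Fin.rev_strictAnti).mp ?_))
  rw [w.surjective.range_eq, Fin.rev_surjective.range_eq]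

@[elab_as_elim]
lemma omegaPerm_induction_right {P : Equiv.Perm (Fin (M + 1)) → Prop}
    (longest : P (omegaPerm (M + 1)))
    (ascent : ∀ w (i : Fin M), w i.castSucc < w i.succ →
      P (w * Equiv.swap i.castSucc i.succ) → P w)
    (w : Equiv.Perm (Fin (M + 1))) : P w := by
  by_contra hw
  obtain ⟨v, hv, hmax⟩ := Set.exists_max_image {v | ¬P v} permLength (Set.toFinite _) ⟨w, hw⟩
  obtain ⟨i, hi⟩ := exists_castSucc_lt_succ_of_ne_omegaPerm (w := v)
    (by rintro rfl; exact hv longest)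
  refine hv (ascent v i hi (by_contra fun hP => ?_))
  have := hmax _ hP
  rw [permLength_mul_swap_of_lt hi] at this
  omega

@[elab_as_elim]
lemma omegaPerm_induction_left {P : Equiv.Perm (Fin (M + 1)) → Prop}
    (longest : P (omegaPerm (M + 1)))
    (ascent : ∀ w (i : Fin M), w⁻¹ i.castSucc < w⁻¹ i.succ →
      P (Equiv.swap i.castSucc i.succ * w) → P w)
    (w : Equiv.Perm (Fin (M + 1))) : P w := by
  rw [← inv_inv w]
  induction w⁻¹ using omegaPerm_induction_right with
  | longest => exact longest
  | ascent v i hi hP =>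
    refine ascent v⁻¹ i (by rwa [inv_inv]) ?_
    rwa [mul_inv_rev, Equiv.swap_inv] at hP

lemma swap_mul_omegaPerm (i : Fin M) :
    Equiv.swap i.castSucc i.succ * omegaPerm (M + 1) =
      omegaPerm (M + 1) * Equiv.swap i.rev.castSucc i.rev.succ := by
  have hfst : omegaPerm (M + 1) i.rev.castSucc = i.succ := by
    simp [omegaPerm, Fin.rev_castSucc]
  have hsnd : omegaPerm (M + 1) i.rev.succ = i.castSucc := by
    simp [omegaPerm, Fin.rev_succ]
  rw [Equiv.mul_swap_eq_swap_mul, hfst, hsnd, Equiv.swap_comm]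

end Permutations

section DividedDifferences

variable [Field F] {M M' : ℕ}

/-- The β-divided difference `∂^β_i f = ((1 + β x_{i+1}) f - (1 + β x_i) s_i f) / (x_i - x_{i+1})`,
acting on functions of the variables `x`. -/
def dividedDiff (β : F) (i : Fin M) (f : (Fin (M + 1) → F) → F) (x : Fin (M + 1) → F) : F :=
  ((1 + β * x i.succ) * f x - (1 + β * x i.castSucc) * f (x ∘ Equiv.swap i.castSucc i.succ)) /
    (x i.castSucc - x i.succ)

lemma dividedDiff_comm (β : F) (i : Fin M) (j : Fin M')
    (f : (Fin (M + 1) → F) → (Fin (M' + 1) → F) → F) (x : Fin (M + 1) → F)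
    (y : Fin (M' + 1) → F) :
    dividedDiff β i (fun x => dividedDiff β j (f x) y) x =
      dividedDiff β j (fun y => dividedDiff β i (fun x => f x y) x) y := by
  simp only [dividedDiff]
  ring

lemma dividedDiff_eq_of_factor {β c p : F} {i : Fin M} {f : (Fin (M + 1) → F) → F}
    {x : Fin (M + 1) → F} (hx : x i.castSucc ≠ x i.succ)
    (hf : f x = (x i.castSucc + c + β * x i.castSucc * c) * p)
    (hfs : f (x ∘ Equiv.swap i.castSucc i.succ) = (x i.succ + c + β * x i.succ * c) * p) :
    dividedDiff β i f x = p := by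
  rw [dividedDiff, hf, hfs, div_eq_iff (sub_ne_zero.mpr hx)]
  ring

end DividedDifferences

section Staircase

variable {M : ℕ}

/-- The staircase `i + j ≤ M + 1` (in 1-based indices) with the corner of row `i` removed. -/
def notchedStaircase (i : Fin M) : Finset (Fin (M + 1) × Fin (M + 1)) :=
  ({p | (p.1 : ℕ) + (p.2 : ℕ) + 2 ≤ M + 1} : Finset _).erase (i.castSucc, i.rev.castSucc)

lemma mem_notchedStaircase {i : Fin M} {p : Fin (M + 1) × Fin (M + 1)} :
    p ∈ notchedStaircase i ↔ (p.1 : ℕ) + p.2 < M ∧ ¬((p.1 : ℕ) = i ∧ (p.2 : ℕ) + i + 1 = M) := by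
  rw [notchedStaircase, Finset.mem_erase, Finset.mem_filter_univ, ne_eq, Prod.ext_iff]
  grind

variable {α : Type*} [CommMonoid α]

lemma prod_notchedStaircase_swap_fst (i : Fin M) (f : Fin (M + 1) → Fin (M + 1) → α) :
    ∏ p ∈ notchedStaircase i, f (Equiv.swap i.castSucc i.succ p.1) p.2 =
      ∏ p ∈ notchedStaircase i, f p.1 p.2 := by
  refine Finset.prod_equiv ((Equiv.swap i.castSucc i.succ).prodCongr (Equiv.refl _)) ?_
    fun _ _ => rfl
  rintro ⟨a, b⟩
  simp only [mem_notchedStaircase, Equiv.prodCongr_apply, Prod.map_apply, Equiv.refl_apply]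
  grind

lemma prod_notchedStaircase_rev (i : Fin M) (f : Fin (M + 1) → Fin (M + 1) → α) :
    ∏ p ∈ notchedStaircase i.rev, f p.1 p.2 = ∏ p ∈ notchedStaircase i, f p.2 p.1 := by
  refine Finset.prod_equiv (Equiv.prodComm _ _) ?_ fun _ _ => rfl
  rintro ⟨a, b⟩
  simp only [mem_notchedStaircase, Equiv.prodComm_apply, Prod.swap_prod_mk]
  grind

end Staircase

namespace IsGroth

variable [Field F] {M : ℕ} {β : F}
  {G : Equiv.Perm (Fin (M + 1)) → (Fin (M + 1) → F) → (Fin (M + 1) → F) → F}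

lemma eq_dividedDiff_mul_swap (hG : IsGroth M β G) {w : Equiv.Perm (Fin (M + 1))} {i : Fin M}
    (hw : w i.castSucc < w i.succ) {x : Fin (M + 1) → F} (hx : x i.castSucc ≠ x i.succ)
    (y : Fin (M + 1) → F) :
    G w x y = dividedDiff β i (fun x => G (w * Equiv.swap i.castSucc i.succ) x y) x := by
  have h := hG.2 (w * Equiv.swap i.castSucc i.succ) i x y
  rw [mul_assoc, Equiv.swap_mul_self, mul_one] at h
  exact h (permLength_mul_swap_of_lt hw).symm hx

lemma omegaPerm_eq_mul_prod (hG : IsGroth M β G) (i : Fin M) (x y : Fin (M + 1) → F) :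
    G (omegaPerm (M + 1)) x y =
      (x i.castSucc + y i.rev.castSucc + β * x i.castSucc * y i.rev.castSucc) *
        ∏ p ∈ notchedStaircase i, (x p.1 + y p.2 + β * x p.1 * y p.2) := by
  have hmem : (i.castSucc, i.rev.castSucc) ∈
      ({p | (p.1 : ℕ) + (p.2 : ℕ) + 2 ≤ M + 1} : Finset (Fin (M + 1) × Fin (M + 1))) := by
    grind
  exact (hG.1 x y).trans (Finset.mul_prod_erase _ _ hmem).symm

lemma dividedDiff_omegaPerm_left (hG : IsGroth M β G) (i : Fin M) {x : Fin (M + 1) → F}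
    (hx : x i.castSucc ≠ x i.succ) (y : Fin (M + 1) → F) :
    dividedDiff β i (fun x => G (omegaPerm (M + 1)) x y) x =
      ∏ p ∈ notchedStaircase i, (x p.1 + y p.2 + β * x p.1 * y p.2) := by
  refine dividedDiff_eq_of_factor hx (hG.omegaPerm_eq_mul_prod i x y) ?_
  rw [hG.omegaPerm_eq_mul_prod i, Function.comp_apply, Equiv.swap_apply_left]
  exact congrArg _ (prod_notchedStaircase_swap_fst i fun a b => x a + y b + β * x a * y b)

lemma dividedDiff_omegaPerm_right (hG : IsGroth M β G) (i : Fin M) (x : Fin (M + 1) → F)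
    {y : Fin (M + 1) → F} (hy : y i.castSucc ≠ y i.succ) :
    dividedDiff β i (G (omegaPerm (M + 1)) x) y =
      ∏ p ∈ notchedStaircase i.rev, (x p.1 + y p.2 + β * x p.1 * y p.2) := by
  have hfactor (y : Fin (M + 1) → F) : G (omegaPerm (M + 1)) x y =
      (y i.castSucc + x i.rev.castSucc + β * y i.castSucc * x i.rev.castSucc) *
        ∏ p ∈ notchedStaircase i, (x p.2 + y p.1 + β * x p.2 * y p.1) := by
    rw [hG.omegaPerm_eq_mul_prod i.rev, Fin.rev_rev,
      prod_notchedStaircase_rev i fun a b => x a + y b + β * x a * y b]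
    ring
  rw [prod_notchedStaircase_rev i fun a b => x a + y b + β * x a * y b]
  refine dividedDiff_eq_of_factor hy (hfactor y) ?_
  rw [hfactor, Function.comp_apply, Equiv.swap_apply_left]
  exact congrArg _ (prod_notchedStaircase_swap_fst i fun a b => x b + y a + β * x b * y a)

/- Downward induction on `w` from the longest permutation, where both sides are explicit; the
inductive step is the commutation of the divided differences in `x` and in `y`. -/
lemma swap_mul_eq_dividedDiff (hG : IsGroth M β G) {w : Equiv.Perm (Fin (M + 1))} {i : Fin M}
    (hw : w⁻¹ i.succ < w⁻¹ i.castSucc) {x y : Fin (M + 1) → F} (hx : Function.Injective x)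
    (hy : y i.castSucc ≠ y i.succ) :
    G (Equiv.swap i.castSucc i.succ * w) x y = dividedDiff β i (G w x) y := by
  have ne_succ {x : Fin (M + 1) → F} (hx : Function.Injective x) (j : Fin M) :
      x j.castSucc ≠ x j.succ := hx.ne Fin.castSucc_lt_succ.ne
  induction w using omegaPerm_induction_right generalizing x with
  | longest =>
    have hasc : (omegaPerm (M + 1) * Equiv.swap i.rev.castSucc i.rev.succ) i.rev.castSucc <
        (omegaPerm (M + 1) * Equiv.swap i.rev.castSucc i.rev.succ) i.rev.succ := by
      simp [omegaPerm]
    rw [swap_mul_omegaPerm, hG.eq_dividedDiff_mul_swap hasc (ne_succ hx _),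
      hG.dividedDiff_omegaPerm_right i x hy, mul_assoc, Equiv.swap_mul_self, mul_one,
      hG.dividedDiff_omegaPerm_left _ (ne_succ hx _)]
  | ascent w j hj ih =>
    have hsw := swap_mul_castSucc_lt_swap_mul_succ hw hj
    have hws := mul_swap_inv_succ_lt_mul_swap_inv_castSucc hw hj
    calc
      G (Equiv.swap i.castSucc i.succ * w) x y
      _ = dividedDiff β j (fun x => dividedDiff β i
            (G (w * Equiv.swap j.castSucc j.succ) x) y) x := by
        rw [hG.eq_dividedDiff_mul_swap hsw (ne_succ hx j), mul_assoc, dividedDiff, dividedDiff,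
          ih hws hx, ih hws (hx.comp (Equiv.injective _))]
      _ = dividedDiff β i (G w x) y := by
        rw [dividedDiff_comm]
        exact congrArg (dividedDiff β i · y)
          (funext fun y => (hG.eq_dividedDiff_mul_swap hj (ne_succ hx j) y).symm)

lemma congr_of_castSucc_eq (hG : IsGroth M β G) (w : Equiv.Perm (Fin (M + 1)))
    {x y y' : Fin (M + 1) → F} (hx : Function.Injective x)
    (hy : ∀ i : Fin M, y i.castSucc = y' i.castSucc) : G w x y = G w x y' := by
  induction w using omegaPerm_induction_right generalizing x with
  | longest =>
    rw [hG.1, hG.1]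
    refine Finset.prod_congr rfl fun p hp => ?_
    have hp : (p.2 : ℕ) < M := by
      rw [Finset.mem_filter_univ] at hp
      omega
    have hyp : y p.2 = y' p.2 := hy ⟨p.2, hp⟩
    rw [hyp]
  | ascent w i hi ih =>
    have hxi : x i.castSucc ≠ x i.succ := hx.ne Fin.castSucc_lt_succ.ne
    rw [hG.eq_dividedDiff_mul_swap hi hxi, hG.eq_dividedDiff_mul_swap hi hxi, dividedDiff,
      dividedDiff, ih hx, ih (hx.comp (Equiv.injective _))]

end IsGroth

section Coefficients

open scoped Matrix

variable [Field F] {n N m : ℕ} {β : F}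

lemma betheVector_comp_swap {t : Fin (N + 1) → F} (hβt : ∀ k, 1 + β * t k ≠ 0) {i : Fin N}
    (hti : t i.castSucc ≠ t i.succ) (r : Fin n) (u : Fin m → F) (c : Fin m → Fin n)
    {g : Fin (N + 1) → Fin n} (hg : g i.castSucc < g i.succ) :
    betheVector β t r u c (g ∘ Equiv.swap i.castSucc i.succ) =
      ((1 + β * negOm β (t i.succ)) * betheVector β t r u c g -
          (1 + β * negOm β (t i.castSucc)) *
            betheVector β (t ∘ Equiv.swap i.castSucc i.succ) r u c g) /
        (negOm β (t i.castSucc) - negOm β (t i.succ)) := by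
  have hne : negOm β (t i.castSucc) - negOm β (t i.succ) ≠ 0 :=
    sub_ne_zero.mpr (negOm_injOn.ne (hβt _) (hβt _) hti)
  have hexchange := congrFun (siteExchange_mulVec_betheVector hβt i r u c) g
  rw [Matrix.mulVec, dotProduct, sum_siteExchange_mul, if_pos hg, if_pos hg] at hexchange
  rw [← hexchange, eq_div_iff hne]
  linear_combination (β * betheVector β t r u c g +
    betheVector β t r u c (g ∘ Equiv.swap i.castSucc i.succ)) *
      one_add_mul_negOm_mul_om (hβt i.castSucc) (hβt i.succ)

lemma ramp_self (N : ℕ) : ramp N N = id :=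
  funext fun j => if_pos j.is_le

lemma betheVector_id {t : Fin (N + 1) → F} (hβt : ∀ k, 1 + β * t k ≠ 0) (x : Fin (N + 1) → F) :
    betheVector β t 0 (fun a : Fin N => x a.castSucc) (fun a => a.rev.succ) id =
      ∏ p : Fin (N + 1) × Fin (N + 1) with (p.1 : ℕ) + (p.2 : ℕ) + 2 ≤ N + 1,
        (x p.1 + negOm β (t p.2) + β * x p.1 * negOm β (t p.2)) := by
  have hramp := betheVector_ramp β t (fun a : Fin N => x a.castSucc) (c := fun a => a.rev.succ)
    fun a => by grind
  rw [ramp_self] at hramp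
  have hlast : ∀ j : Fin (N + 1), ¬(Fin.last N : ℕ) + (j : ℕ) + 2 ≤ N + 1 := by grind
  simp only [hramp, add_negOm_add_mul _ (hβt _), Finset.prod_filter, Fintype.prod_prod_type]
  rw [Fin.prod_univ_castSucc (n := N)]
  simp only [hlast, if_false, Finset.prod_const_one, mul_one, Fin.val_castSucc]
  refine Finset.prod_congr rfl fun a _ => Finset.prod_congr rfl fun j _ => if_congr ?_ rfl rfl
  omega

lemma IsGroth.apply_negOm_eq_betheVector
    {G : Equiv.Perm (Fin (N + 1)) → (Fin (N + 1) → F) → (Fin (N + 1) → F) → F}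
    (hG : IsGroth N β G) (w : Equiv.Perm (Fin (N + 1))) {x t : Fin (N + 1) → F}
    (hx : Function.Injective x) (ht : Function.Injective t) (hβt : ∀ k, 1 + β * t k ≠ 0) :
    G w x (fun j => negOm β (t j)) =
      betheVector β t 0 (fun a : Fin N => x a.castSucc) (fun a => a.rev.succ)
        (omegaPerm (N + 1) ∘ ⇑w⁻¹) := by
  induction w using omegaPerm_induction_left generalizing t with
  | longest =>
    rw [hG.1, ← betheVector_id hβt x]
    exact congrArg _ (omegaPerm (N + 1)).self_comp_symm.symm
  | ascent w i hi ih =>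
    set s := Equiv.swap i.castSucc i.succ with hs
    have hti : t i.castSucc ≠ t i.succ := ht.ne Fin.castSucc_lt_succ.ne
    have hdesc : (s * w)⁻¹ i.succ < (s * w)⁻¹ i.castSucc := by
      simpa [hs] using hi
    have hconfig : (omegaPerm (N + 1) ∘ ⇑(s * w)⁻¹) ∘ s = omegaPerm (N + 1) ∘ ⇑w⁻¹ := by
      funext k
      simp [hs]
    have hasc : (omegaPerm (N + 1) ∘ ⇑(s * w)⁻¹) i.castSucc <
        (omegaPerm (N + 1) ∘ ⇑(s * w)⁻¹) i.succ := Fin.rev_lt_rev.mpr hdesc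
    have hleft := hG.swap_mul_eq_dividedDiff hdesc (y := fun j => negOm β (t j)) hx
      (negOm_injOn.ne (hβt _) (hβt _) hti)
    rw [← mul_assoc, Equiv.swap_mul_self, one_mul, dividedDiff, ih ht hβt] at hleft
    rw [hleft, ← hconfig, betheVector_comp_swap hβt hti _ _ _ hasc,
      ← ih (ht.comp s.injective) fun k => hβt _]
    rfl

end Coefficients

lemma eq_sum_perm_smul_ket [Field F] {N : ℕ} {φ : (Fin N → Fin N) → F}
    (hφ : ∀ g, φ g ≠ 0 → Function.Injective g) :
    φ = ∑ v : Equiv.Perm (Fin N), φ v • ket N N v := by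
  funext g
  simp only [Finset.sum_apply, Pi.smul_apply, smul_eq_mul, ket, mul_ite, mul_one, mul_zero]
  by_cases hg : Function.Injective g
  · obtain ⟨v, rfl⟩ : ∃ v : Equiv.Perm (Fin N), ⇑v = g :=
      ⟨Equiv.ofBijective g (Finite.injective_iff_bijective.mp hg), rfl⟩
    simp [DFunLike.coe_fn_eq]
  · have hne (v : Equiv.Perm (Fin N)) : g ≠ v := fun h => hg (h ▸ v.injective)
    simp [hne, not_imp_comm.mp (hφ g) hg]

lemma one_add_mul_ne_zero_of_algebraicIndependent {K ι : Type*} [CommRing K] [Nontrivial K]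
    [CommRing F] [Algebra K F] {f : ι → F} (hf : AlgebraicIndependent K f) (i j : ι) :
    1 + f i * f j ≠ 0 := by
  intro h
  have hpoly : (1 + MvPolynomial.X i * MvPolynomial.X j : MvPolynomial ι K) = 0 :=
    hf (by simpa using h)
  simpa using congrArg (MvPolynomial.eval 0) hpoly

theorem groth_expansion_general [Field F] (M : ℕ) (β : F)
    (σ : Fin (M + 1) → F) (t : Fin (M + 2) → F)
    (hσ : Function.Injective (Fin.snoc σ 0 : Fin (M + 2) → F)) (ht : Function.Injective t)
    (hβt : ∀ k, 1 + β * t k ≠ 0)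
    (G : Equiv.Perm (Fin (M + 2)) → (Fin (M + 2) → F) → (Fin (M + 2) → F) → F)
    (hG : IsGroth (M + 1) β G) :
    Matrix.mulVec (descB M β t σ) (ket (M + 2) (M + 2) fun _ => 0) =
      ∑ w : Equiv.Perm (Fin (M + 2)),
        G w (Fin.snoc σ 0) (Fin.snoc (fun i : Fin (M + 1) => negOm β (t i.castSucc)) 0) •
          ket (M + 2) (M + 2) fun j => omegaPerm (M + 2) (w⁻¹ j) := by
  set Ψ := betheVector β t 0 σ fun a => a.rev.succ with hΨ
  have hcoeff (w : Equiv.Perm (Fin (M + 2))) :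
      G w (Fin.snoc σ 0) (Fin.snoc (fun i : Fin (M + 1) => negOm β (t i.castSucc)) 0) =
        Ψ (omegaPerm (M + 2) ∘ ⇑w⁻¹) := by
    rw [hG.congr_of_castSucc_eq w (y' := fun j => negOm β (t j)) hσ (by simp),
      hG.apply_negOm_eq_betheVector w hσ ht hβt]
    simp [hΨ]
  have hsupport : ∀ g, Ψ g ≠ 0 → Function.Injective g := fun g =>
    injective_of_betheVector_ne_zero ((Fin.succ_injective _).comp Fin.rev_injective)
      fun _ => Fin.succ_ne_zero _
  calc
    Matrix.mulVec (descB M β t σ) (ket (M + 2) (M + 2) fun _ => 0)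
    _ = ∑ v : Equiv.Perm (Fin (M + 2)), Ψ v • ket (M + 2) (M + 2) v :=
      eq_sum_perm_smul_ket hsupport
    _ = ∑ w : Equiv.Perm (Fin (M + 2)), Ψ (omegaPerm (M + 2) ∘ ⇑w⁻¹) •
          ket (M + 2) (M + 2) (omegaPerm (M + 2) ∘ ⇑w⁻¹) :=
      (Equiv.sum_comp ((Equiv.inv _).trans (Equiv.mulLeft (omegaPerm (M + 2))))
        fun v => Ψ v • ket (M + 2) (M + 2) v).symm
    _ = _ := by
      simp only [hcoeff]
      rfl

/-- **Theorem `thm1`**: for `n = N = M+2`,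
`B_{N-1}(σ_1) B_{N-2}(σ_2) ⋯ B_1(σ_{N-1}) |Ω⟩
  = ∑_{w ∈ S_N} G^β_w(σ_1,…,σ_{N-1}; ⊖t_1,…,⊖t_{N-1}) |ω_N w⁻¹⟩`. -/
theorem groth_expansion [Field F] [CharZero F] (M : ℕ) (β : F)
    (σ : Fin (M + 1) → F) (t : Fin (M + 2) → F)
    (hind : AlgebraicIndependent ℚ
      (Sum.elim (fun _ : Unit => β) (Sum.elim σ t)))
    (G : Equiv.Perm (Fin (M + 2)) → (Fin (M + 2) → F) → (Fin (M + 2) → F) → F)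
    (hG : IsGroth (M + 1) β G) :
    Matrix.mulVec (descB M β t σ) (ket (M + 2) (M + 2) fun _ => 0) =
      ∑ w : Equiv.Perm (Fin (M + 2)),
        G w (Fin.snoc σ 0) (Fin.snoc (fun i : Fin (M + 1) => negOm β (t i.castSucc)) 0) •
          ket (M + 2) (M + 2) fun j => omegaPerm (M + 2) (w⁻¹ j) := by
  have hσ : Function.Injective σ := hind.injective.comp (Sum.inr_injective.comp Sum.inl_injective)
  have hσ_ne (a : Fin (M + 1)) : σ a ≠ 0 := hind.ne_zero (Sum.inr (Sum.inl a))
  have ht : Function.Injective t := hind.injective.comp (Sum.inr_injective.comp Sum.inr_injective)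
  have hβt (k : Fin (M + 2)) : 1 + β * t k ≠ 0 :=
    one_add_mul_ne_zero_of_algebraicIndependent hind (Sum.inl ()) (Sum.inr (Sum.inr k))
  exact groth_expansion_general M β σ t
    (Fin.snoc_injective_iff.mpr ⟨hσ, by simpa using hσ_ne⟩) ht hβt G hG
end
end

section
/- (Interpolation formula) Let L_n(t,β) be the ℚ(β, t_1,…,t_n)-span of the monomials x_1^{i_1} x_2^{i_2} ⋯ x_n^{i_n} with 0 ≤ i_j ≤ n−j, inside the polynomial ring ℚ(β,t_1,…,t_n)[x_1,…,x_n]. Then for any F(x; t, β) ∈ L_n(t,β), F(x; t, β) = ∑_{v ∈ S_n} G^β_v(x; ⊖z) · ∂̄^β_v F(z; t, β), as an identity of rational functions in the variables x, z, t and β, where F(z;t,β) denotes F with x replaced by z and ∂̄^β_v acts on the z-variables. -/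
set_option synthInstance.maxHeartbeats 1000000
set_option maxHeartbeats 1000000

noncomputable section
open scoped BigOperators

variable {F : Type*}

/-- The operator `∂̄^β_i = ∂^β_i + β`, acting on functions of `M+1` variables
in the pair of variables with indices `i, i+1`. -/
def ddbar [Field F] {M : ℕ} (β : F) (i : Fin M) (f : (Fin (M + 1) → F) → F) :
    (Fin (M + 1) → F) → F := fun z =>
  ((1 + β * z i.succ) * f z -
      (1 + β * z i.castSucc) * f (fun j => z (Equiv.swap i.castSucc i.succ j))) /
    (z i.castSucc - z i.succ) + β * f z

/-- `∂̄^β_{i_1} ∂̄^β_{i_2} ⋯ ∂̄^β_{i_ℓ}` for a word `L = [i_1, …, i_ℓ]`. -/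
def ddbarWord [Field F] {M : ℕ} (β : F) (L : List (Fin M)) (f : (Fin (M + 1) → F) → F) :
    (Fin (M + 1) → F) → F :=
  L.foldr (ddbar β) f

/-- `L = [i_1, …, i_ℓ]` is a reduced word for `v`, i.e. `v = s_{i_1} ⋯ s_{i_ℓ}`
with `ℓ = ℓ(v)`. -/
def IsReducedWord {M : ℕ} (L : List (Fin M)) (v : Equiv.Perm (Fin (M + 1))) : Prop :=
  (L.map fun i => Equiv.swap (Fin.castSucc i) (Fin.succ i)).prod = v ∧ L.length = permLength v

/-!
For `z` injective with `1 + β z_j ≠ 0`, the matrix `G_v(z ∘ u; ⊖z)`, indexed by permutations `u`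
and `v`, is triangular for the length with nonzero diagonal. Hence every `f` has an expansion
`f(x) = ∑ v, c_v G_v(x; ⊖z)` valid at all the points `x = z ∘ u`. Applying `∂̄_i` to it kills `G_v`
when `v` ascends at `i` and produces `G_{v s_i} + β G_v` when `v` descends, so `∂̄_i` acts on the
coefficients `c` by a shift; following a reduced word of `v` down to the value at `x = z`, where
only `G_1 = 1` survives, gives `c_v = ∂̄_v f(z)`. Finally both `F` and the `G_v(·; ⊖z)` lie in the
span of the staircase monomials, where a polynomial vanishing at all the points `z ∘ u` is zero, so
the expansion of `F` holds identically in `x`.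
-/

local notation "τ(" i ")" => Equiv.swap (Fin.castSucc i) (Fin.succ i)

/-! ### Length and descents of permutations -/

section Permutations

variable {N M : ℕ}

lemma swap_castSucc_succ_lt_iff {i : Fin M} {a b : Fin (M + 1)}
    (h : ¬(a = i.castSucc ∧ b = i.succ)) (h' : ¬(a = i.succ ∧ b = i.castSucc)) :
    τ(i) a < τ(i) b ↔ a < b := by
  simp only [Equiv.swap_apply_def]
  split_ifs <;> simp only [Fin.ext_iff, Fin.lt_def, Fin.val_castSucc, Fin.val_succ] at * <;> omega

lemma mul_swap_mul_swap (w : Equiv.Perm (Fin (M + 1))) (i : Fin M) : w * τ(i) * τ(i) = w := by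
  rw [mul_assoc, Equiv.swap_mul_self, mul_one]

lemma apply_castSucc_ne_apply_succ {α : Type*} {x : Fin (M + 1) → α} (hx : Function.Injective x)
    (i : Fin M) : x i.castSucc ≠ x i.succ :=
  hx.ne Fin.castSucc_lt_succ.ne

lemma ascent_or_descent (w : Equiv.Perm (Fin (M + 1))) (i : Fin M) :
    w i.castSucc < w i.succ ∨ w i.succ < w i.castSucc :=
  (apply_castSucc_ne_apply_succ w.injective i).lt_or_gt

/-- The inversions of `w`, recorded as pairs of values rather than pairs of positions. With this
choice right multiplication by a simple transposition only adds or removes one pair. -/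
def valueInversions (w : Equiv.Perm (Fin N)) : Finset (Fin N × Fin N) :=
  Finset.univ.filter fun p => p.1 < p.2 ∧ w⁻¹ p.2 < w⁻¹ p.1

lemma mem_valueInversions {w : Equiv.Perm (Fin N)} {p : Fin N × Fin N} :
    p ∈ valueInversions w ↔ p.1 < p.2 ∧ w⁻¹ p.2 < w⁻¹ p.1 := by
  simp [valueInversions]

lemma card_valueInversions (w : Equiv.Perm (Fin N)) :
    (valueInversions w).card = permLength w := by
  refine Finset.card_bij' (fun p _ => (w⁻¹ p.2, w⁻¹ p.1)) (fun p _ => (w p.2, w p.1)) ?_ ?_ ?_ ?_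
    <;> simp +contextual [valueInversions]

lemma permLength_one : permLength (1 : Equiv.Perm (Fin N)) = 0 := by
  simp only [permLength, Finset.card_eq_zero, Finset.filter_eq_empty_iff]
  exact fun p _ h => h.1.asymm h.2

lemma valueInversions_one : valueInversions (1 : Equiv.Perm (Fin N)) = ∅ := by
  rw [← Finset.card_eq_zero, card_valueInversions, permLength_one]

lemma notMem_valueInversions_mul_swap {w : Equiv.Perm (Fin (M + 1))} {i : Fin M} :
    (w i.succ, w i.castSucc) ∉ valueInversions (w * τ(i)) := by
  simp [mem_valueInversions, Fin.castSucc_lt_succ.le]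

lemma valueInversions_eq_insert {w : Equiv.Perm (Fin (M + 1))} {i : Fin M}
    (h : w i.succ < w i.castSucc) :
    valueInversions w = insert (w i.succ, w i.castSucc) (valueInversions (w * τ(i))) := by
  have hlt : i.castSucc < i.succ := Fin.castSucc_lt_succ
  ext ⟨a, b⟩
  obtain ⟨a, rfl⟩ := w.surjective a
  obtain ⟨b, rfl⟩ := w.surjective b
  simp only [mem_valueInversions, Finset.mem_insert, Prod.mk.injEq, EmbeddingLike.apply_eq_iff_eq,
    mul_inv_rev, Equiv.Perm.mul_apply, Equiv.Perm.coe_inv, Equiv.symm_apply_apply, Equiv.swap_inv]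
  by_cases hdesc : a = i.succ ∧ b = i.castSucc
  · obtain ⟨rfl, rfl⟩ := hdesc
    simp [h, hlt]
  by_cases hasc : a = i.castSucc ∧ b = i.succ
  · obtain ⟨rfl, rfl⟩ := hasc
    simp [h.le, hlt.not_gt, hlt.ne]
  · rw [swap_castSucc_succ_lt_iff (by tauto) (by tauto)]
    tauto

lemma permLength_mul_swap_of_descent {w : Equiv.Perm (Fin (M + 1))} {i : Fin M}
    (h : w i.succ < w i.castSucc) : permLength (w * τ(i)) + 1 = permLength w := by
  rw [← card_valueInversions w, valueInversions_eq_insert h,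
    Finset.card_insert_of_notMem notMem_valueInversions_mul_swap, card_valueInversions]

lemma permLength_mul_swap_of_ascent {w : Equiv.Perm (Fin (M + 1))} {i : Fin M}
    (h : w i.castSucc < w i.succ) : permLength (w * τ(i)) = permLength w + 1 := by
  have := permLength_mul_swap_of_descent (w := w * τ(i)) (i := i) (by simpa using h)
  rw [← this, mul_swap_mul_swap]

lemma permLength_mul_swap_le (w : Equiv.Perm (Fin (M + 1))) (i : Fin M) :
    permLength (w * τ(i)) ≤ permLength w + 1 := by
  rcases ascent_or_descent w i with h | h
  · exact (permLength_mul_swap_of_ascent h).le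
  · have := permLength_mul_swap_of_descent h
    omega

lemma permLength_prod_map_swap_le (L : List (Fin M)) :
    permLength (L.map fun i => τ(i)).prod ≤ L.length := by
  induction L using List.reverseRecOn with
  | nil => simp [permLength_one]
  | append_singleton L i ih =>
    simpa using (permLength_mul_swap_le _ i).trans (Nat.add_le_add_right ih 1)

lemma exists_isReducedWord_of_append_singleton {L : List (Fin M)} {i : Fin M}
    {v : Equiv.Perm (Fin (M + 1))} (hv : IsReducedWord (L ++ [i]) v) :
    ∃ w : Equiv.Perm (Fin (M + 1)),
      IsReducedWord L w ∧ w i.castSucc < w i.succ ∧ w * τ(i) = v := by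
  obtain ⟨hprod, hlen⟩ := hv
  set w := (L.map fun i => τ(i)).prod with hw
  have hwv : w * τ(i) = v := by simpa using hprod
  have hle : permLength w ≤ L.length := permLength_prod_map_swap_le L
  rw [List.length_append, List.length_singleton, ← hwv] at hlen
  have hge := permLength_mul_swap_le w i
  refine ⟨w, ⟨hw.symm, by omega⟩, (ascent_or_descent w i).resolve_right fun h => ?_, hwv⟩
  have := permLength_mul_swap_of_descent h
  omega

lemma eq_omegaPerm_of_rev_le {u : Equiv.Perm (Fin N)} (h : ∀ j, j.rev ≤ u j) :
    u = omegaPerm N := by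
  have hsum : ∑ j, (omegaPerm N j : ℕ) = ∑ j, (u j : ℕ) := by
    rw [Equiv.sum_comp u (fun j => (j : ℕ)), Equiv.sum_comp (omegaPerm N) (fun j => (j : ℕ))]
  have heq := (Finset.sum_eq_sum_iff_of_le fun j _ => Fin.le_def.1 (h j)).1 hsum
  exact Equiv.ext fun j => Fin.ext (heq j (Finset.mem_univ j)).symm

lemma eq_omegaPerm_of_forall_descent {w : Equiv.Perm (Fin (M + 1))}
    (h : ∀ i : Fin M, w i.succ < w i.castSucc) : w = omegaPerm (M + 1) := by
  have hmono : StrictMono fun j => (w j).rev :=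
    fun _ _ hab => Fin.rev_lt_rev.2 (Fin.strictAnti_iff_succ_lt.2 h hab)
  exact eq_omegaPerm_of_rev_le fun j => Fin.rev_le_iff.1 (hmono.apply_le (x := j))

@[elab_as_elim]
lemma omegaPerm_descending_induction {P : Equiv.Perm (Fin (M + 1)) → Prop}
    (omega : P (omegaPerm (M + 1)))
    (descent : ∀ w (i : Fin M), w i.succ < w i.castSucc → P w → P (w * τ(i)))
    (w : Equiv.Perm (Fin (M + 1))) : P w := by
  by_cases h : ∀ i : Fin M, w i.succ < w i.castSucc
  · exact eq_omegaPerm_of_forall_descent h ▸ omega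
  · obtain ⟨i, hi⟩ := not_forall.1 h
    have hasc := (ascent_or_descent w i).resolve_right hi
    have := descent (w * τ(i)) i (by simpa using hasc)
      (omegaPerm_descending_induction omega descent (w * τ(i)))
    rwa [mul_swap_mul_swap] at this
termination_by (M + 1) * (M + 1) - permLength w
decreasing_by
  have hlen := permLength_mul_swap_of_ascent hasc
  have hbound : permLength (w * τ(i)) ≤ (M + 1) * (M + 1) :=
    (Finset.card_le_univ _).trans_eq (by simp)
  omega

end Permutations

/-! ### Staircase polynomials -/

section Staircase

open MvPolynomial

/-- The space `L_n` of the interpolation formula: polynomials in `x_0, …, x_{n-1}` spanned by the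
monomials in which the exponent of `x_j` is less than `n - j`. -/
def staircase (R : Type*) [CommSemiring R] (n : ℕ) : Submodule R (MvPolynomial (Fin n) R) :=
  restrictSupport R {d | ∀ j, d j + j < n}

lemma mem_staircase_iff {R : Type*} [CommSemiring R] {n : ℕ} {P : MvPolynomial (Fin n) R} :
    P ∈ staircase R n ↔ ∀ j, P.degreeOf j + j < n := by
  have hdeg (j : Fin n) : P.degreeOf j + j < n ↔ ∀ d ∈ P.support, d j + j < n := by
    simp only [← Nat.lt_sub_iff_add_lt, degreeOf_lt_iff (Nat.sub_pos_of_lt j.isLt)]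
  simp only [staircase, mem_restrictSupport_iff, Set.subset_def, hdeg, Finset.mem_coe,
    Set.mem_ofPred_eq]
  exact ⟨fun h j d hd => h d hd j, fun h d hd j => h j d hd⟩

lemma sum_C_mul_prod_X_pow_mem_staircase {R : Type*} [CommSemiring R] {n : ℕ}
    (c : ((j : Fin n) → Fin (n - (j : ℕ))) → R) :
    ∑ d, C (c d) * ∏ j, X j ^ (d j : ℕ) ∈ staircase R n := by
  refine Submodule.sum_mem _ fun d _ => ?_
  rw [← smul_eq_C_mul]
  refine Submodule.smul_mem _ _ ?_
  nontriviality R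
  refine mem_staircase_iff.2 fun j => ?_
  have hdeg : (∏ k, X k ^ (d k : ℕ) : MvPolynomial (Fin n) R).degreeOf j ≤ d j := by
    refine (degreeOf_prod_le _ _ _).trans_eq ?_
    rw [Finset.sum_eq_single_of_mem j (Finset.mem_univ _) fun k _ hk =>
      degreeOf_X_pow_of_ne _ hk.symm, degreeOf_X_self_pow]
  have := (d j).isLt
  omega

lemma eval_C_finSuccEquiv_mem_staircase {R : Type*} [CommSemiring R] {n : ℕ}
    {P : MvPolynomial (Fin (n + 1)) R} (hP : P ∈ staircase R (n + 1)) (a : R) :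
    (finSuccEquiv R n P).eval (C a) ∈ staircase R n := by
  rw [Polynomial.eval_eq_sum_range]
  refine Submodule.sum_mem _ fun k _ => ?_
  rw [← C_pow, mul_comm, ← smul_eq_C_mul]
  refine Submodule.smul_mem _ _ (mem_staircase_iff.2 fun j => ?_)
  have hcoeff := degreeOf_coeff_finSuccEquiv P j k
  have hj := mem_staircase_iff.1 hP j.succ
  rw [Fin.val_succ] at hj
  omega

-- Fixing the first variable to one of the values `z a` leaves a staircase polynomial vanishing at
-- the permutations of the other values, so all `n + 1` values are roots in the first variable.
theorem eq_zero_of_mem_staircase_of_eval_perm_eq_zero {R : Type*} [CommRing R] [IsDomain R] {n : ℕ}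
    {P : MvPolynomial (Fin n) R} (hP : P ∈ staircase R n) {z : Fin n → R}
    (hz : Function.Injective z) (h : ∀ u : Equiv.Perm (Fin n), eval (z ∘ u) P = 0) : P = 0 := by
  induction n with
  | zero =>
    obtain ⟨a, rfl⟩ := C_surjective (R := R) (Fin 0) P
    simpa using h 1
  | succ n ih =>
    have hroot (a : Fin (n + 1)) : (finSuccEquiv R n P).eval (C (z a)) = 0 := by
      refine ih (eval_C_finSuccEquiv_mem_staircase hP (z a))
        (hz.comp ((Equiv.swap 0 a).injective.comp (Fin.succ_injective n))) fun u => ?_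
      have hcons : z ∘ Equiv.Perm.decomposeFin.symm (a, u) =
          Fin.cons (z a) ((z ∘ Equiv.swap 0 a ∘ Fin.succ) ∘ u) := by
        funext j
        refine Fin.cases ?_ (fun j => ?_) j <;> simp
      rw [← Polynomial.eval₂_hom, eval_C, ← Polynomial.eval_map, ← eval_eq_eval_mv_eval', ← hcons]
      exact h _
    have hdeg : (finSuccEquiv R n P).natDegree < Fintype.card (Fin (n + 1)) := by
      simpa [natDegree_finSuccEquiv] using mem_staircase_iff.1 hP 0
    exact (map_eq_zero_iff _ (finSuccEquiv R n).injective).1 <|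
      Polynomial.eq_zero_of_natDegree_lt_card_of_eval_eq_zero _
        ((C_injective (Fin n) R).comp hz) hroot hdeg

end Staircase

/-! ### Divided differences of polynomials -/

section DividedDifference

open MvPolynomial

variable {σ R : Type*} [CommRing R]

lemma degreeOf_X_sub_X_left [Nontrivial R] {i j : σ} (h : i ≠ j) :
    (X i - X j : MvPolynomial σ R).degreeOf i = 1 := by
  rw [sub_eq_add_neg, degreeOf_add_eq_of_degreeOf_lt, degreeOf_X_self]
  simp [degreeOf_neg, degreeOf_X_of_ne h]

lemma degreeOf_X_sub_X_right [Nontrivial R] {i j : σ} (h : i ≠ j) :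
    (X i - X j : MvPolynomial σ R).degreeOf j = 1 := by
  rw [← neg_sub, degreeOf_neg, degreeOf_X_sub_X_left h.symm]

variable [DecidableEq σ]

lemma X_sub_X_dvd_sub_rename_swap (i j : σ) (P : MvPolynomial σ R) :
    X i - X j ∣ P - rename (Equiv.swap i j) P := by
  set I : Ideal (MvPolynomial σ R) := Ideal.span {X i - X j}
  have hmem : X i - X j ∈ I := Ideal.mem_span_singleton_self _
  have hfix : (Ideal.Quotient.mkₐ R I).comp (rename (Equiv.swap i j)) = Ideal.Quotient.mkₐ R I := by
    refine algHom_ext fun k => ?_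
    simp only [AlgHom.comp_apply, rename_X, Ideal.Quotient.mkₐ_eq_mk, Ideal.Quotient.eq]
    rcases eq_or_ne k i with rfl | hki
    · rw [Equiv.swap_apply_left, ← neg_sub]
      exact I.neg_mem hmem
    rcases eq_or_ne k j with rfl | hkj
    · rwa [Equiv.swap_apply_right]
    · rw [Equiv.swap_apply_of_ne_of_ne hki hkj, sub_self]
      exact I.zero_mem
  rw [← Ideal.mem_span_singleton, ← Ideal.Quotient.eq]
  exact (DFunLike.congr_fun hfix P).symm

lemma exists_X_sub_X_mul_eq (β : R) (i j : σ) (P : MvPolynomial σ R) :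
    ∃ Q, (X i - X j) * Q =
      (1 + C β * X j) * P - (1 + C β * X i) * rename (Equiv.swap i j) P := by
  obtain ⟨Q, hQ⟩ := X_sub_X_dvd_sub_rename_swap i j P
  refine ⟨(1 + C β * X j) * Q - C β * rename (Equiv.swap i j) P, ?_⟩
  linear_combination (-(1 + C β * X j)) * hQ

lemma degreeOf_C_add_C_mul_X_le (a b : R) (i k : σ) :
    (C a + C b * X i : MvPolynomial σ R).degreeOf k ≤ if k = i then 1 else 0 := by
  rcases subsingleton_or_nontrivial R with _ | _
  · simp [Subsingleton.elim (C a + C b * X i : MvPolynomial σ R) 0]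
  refine (degreeOf_add_le _ _ _).trans (max_le (by simp) ?_)
  exact (degreeOf_C_mul_le _ _ _).trans_eq (degreeOf_X k i)

lemma degreeOf_betaDifference_le (β : R) (i j k : σ) (P : MvPolynomial σ R) :
    ((1 + C β * X j) * P - (1 + C β * X i) * rename (Equiv.swap i j) P).degreeOf k ≤
      max ((if k = j then 1 else 0) + P.degreeOf k)
        ((if k = i then 1 else 0) + P.degreeOf (Equiv.swap i j k)) := by
  have hrename : (rename (Equiv.swap i j) P).degreeOf k = P.degreeOf (Equiv.swap i j k) := by
    simpa using degreeOf_rename_of_injective (p := P) (Equiv.swap i j).injective (Equiv.swap i j k)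
  refine (degreeOf_sub_le _ _ _).trans (max_le_max ?_ ?_) <;>
    refine (degreeOf_mul_le _ _ _).trans ?_
  · exact Nat.add_le_add_right (by simpa using degreeOf_C_add_C_mul_X_le 1 β j k) _
  · exact Nat.add_le_add (by simpa using degreeOf_C_add_C_mul_X_le 1 β i k) hrename.le

theorem exists_mem_staircase_X_sub_X_mul_eq [IsDomain R] {M : ℕ} (β : R) (i : Fin M)
    {P : MvPolynomial (Fin (M + 1)) R} (hP : P ∈ staircase R (M + 1)) :
    ∃ Q ∈ staircase R (M + 1), (X i.castSucc - X i.succ) * Q =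
      (1 + C β * X i.succ) * P - (1 + C β * X i.castSucc) * rename τ(i) P := by
  obtain ⟨Q, hQ⟩ := exists_X_sub_X_mul_eq β i.castSucc i.succ P
  refine ⟨Q, ?_, hQ⟩
  rcases eq_or_ne Q 0 with rfl | hQ0
  · exact Submodule.zero_mem _
  have hne : i.castSucc ≠ i.succ := Fin.castSucc_lt_succ.ne
  have hX : (X i.castSucc - X i.succ : MvPolynomial (Fin (M + 1)) R) ≠ 0 :=
    sub_ne_zero.2 (X_injective.ne hne)
  refine mem_staircase_iff.2 fun j => ?_
  have hdeg := degreeOf_betaDifference_le β i.castSucc i.succ j P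
  rw [← hQ, degreeOf_mul_eq hX hQ0] at hdeg
  have hP := mem_staircase_iff.1 hP
  have hPj := hP j
  have hPleft := hP i.castSucc
  have hPright := hP i.succ
  rcases eq_or_ne j i.castSucc with rfl | hleft
  · simp only [degreeOf_X_sub_X_left hne, hne, if_true, if_false, Equiv.swap_apply_left] at hdeg
    simp only [Fin.val_castSucc, Fin.val_succ] at *
    omega
  rcases eq_or_ne j i.succ with rfl | hright
  · simp only [degreeOf_X_sub_X_right hne, hne.symm, if_true, if_false,
      Equiv.swap_apply_right] at hdeg
    simp only [Fin.val_castSucc, Fin.val_succ] at *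
    omega
  · simp only [hleft, hright, if_false, Equiv.swap_apply_of_ne_of_ne hleft hright] at hdeg
    omega

end DividedDifference

/-! ### Localization of double Grothendieck polynomials at permuted points -/

lemma isUnit_of_triangular {m α K : Type*} [Fintype m] [DecidableEq m] [LinearOrder α] [Field K]
    {A : Matrix m m K} (b : m → α) (hzero : ∀ i j, b i ≤ b j → i ≠ j → A i j = 0)
    (hdiag : ∀ i, A i i ≠ 0) : IsUnit A := by
  have htri : A.BlockTriangular (OrderDual.toDual ∘ b) := fun i j (hij : b i < b j) =>
    hzero i j hij.le (by rintro rfl; exact hij.false)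
  have hblock (a : αᵒᵈ) : A.toSquareBlock (OrderDual.toDual ∘ b) a =
      Matrix.diagonal fun i : {i // (OrderDual.toDual ∘ b) i = a} => A i i := by
    ext i j
    rcases eq_or_ne i j with rfl | hij
    · simp [Matrix.toSquareBlock_def]
    · rw [Matrix.diagonal_apply_ne _ hij]
      have hb : b i = b j := OrderDual.toDual.injective (i.2.trans j.2.symm)
      exact hzero i j hb.le (Subtype.coe_injective.ne hij)
  rw [Matrix.isUnit_iff_isUnit_det, isUnit_iff_ne_zero, htri.det]
  simp_rw [hblock, Matrix.det_diagonal]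
  exact Finset.prod_ne_zero_iff.2 fun a _ => Finset.prod_ne_zero_iff.2 fun i _ => hdiag i

section Grothendieck

variable [Field F] {M : ℕ} {β : F}
  {G : Equiv.Perm (Fin (M + 1)) → (Fin (M + 1) → F) → (Fin (M + 1) → F) → F}

lemma add_negOm_add_mul_negOm {a b : F} (hb : 1 + β * b ≠ 0) :
    a + negOm β b + β * a * negOm β b = (a - b) / (1 + β * b) := by
  have h : negOm β b * (1 + β * b) = -b := div_mul_cancel₀ _ hb
  rw [eq_div_iff hb]
  linear_combination (1 + β * a) * h

lemma groth_comp_perm_eq_zero (hG : IsGroth M β G) {z : Fin (M + 1) → F}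
    (hz : Function.Injective z) (hb : ∀ j, 1 + β * z j ≠ 0) {u v : Equiv.Perm (Fin (M + 1))}
    (hlen : permLength u ≤ permLength v) (hne : u ≠ v) : G v (z ∘ u) (negOm β ∘ z) = 0 := by
  induction v using omegaPerm_descending_induction generalizing u with
  | omega =>
    obtain ⟨j, hj⟩ : ∃ j, u j < j.rev := by
      contrapose! hne
      exact eq_omegaPerm_of_rev_le hne
    rw [Fin.lt_def, Fin.val_rev] at hj
    rw [hG.1]
    refine Finset.prod_eq_zero (i := (j, u j)) (by simp; omega) ?_
    simp only [Function.comp_apply]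
    rw [add_negOm_add_mul_negOm (hb _), sub_self, zero_div]
  | descent v i hv ih =>
    have hlen_v := permLength_mul_swap_of_descent hv
    have hlen_u := permLength_mul_swap_le u i
    have hu : G v (z ∘ u) (negOm β ∘ z) = 0 := ih (by omega) (by rintro rfl; omega)
    have hus : G v (z ∘ ⇑(u * τ(i))) (negOm β ∘ z) = 0 :=
      ih (u := u * τ(i)) (by omega) (by rintro rfl; exact hne (mul_swap_mul_swap u i).symm)
    have hrec := hG.2 v i (z ∘ u) (negOm β ∘ z) hlen_v
      (apply_castSucc_ne_apply_succ (hz.comp u.injective) i)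
    rw [hrec, hu, show (fun j => (z ∘ u) (τ(i) j)) = z ∘ ⇑(u * τ(i)) from rfl, hus]
    simp

lemma prod_staircase_eq_prod_valueInversions {A : Type*} [CommMonoid A] {N : ℕ}
    (g : Fin N → Fin N → A) :
    ∏ p ∈ Finset.univ.filter (fun p : Fin N × Fin N => (p.1 : ℕ) + (p.2 : ℕ) + 2 ≤ N),
      g (omegaPerm N p.1) p.2 = ∏ p ∈ valueInversions (omegaPerm N), g p.2 p.1 := by
  refine Finset.prod_equiv ((Equiv.prodComm _ _).trans ((Equiv.refl _).prodCongr (omegaPerm N)))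
    (fun p => ?_) fun p _ => rfl
  change _ ↔ (p.2, Fin.rev p.1) ∈ _
  simp only [mem_valueInversions, Finset.mem_filter_univ]
  change _ ↔ p.2 < Fin.rev p.1 ∧ Fin.rev (Fin.rev p.1) < Fin.rev p.2
  simp only [Fin.lt_def, Fin.val_rev]
  omega

lemma groth_comp_self (hG : IsGroth M β G) {z : Fin (M + 1) → F} (hz : Function.Injective z)
    (hb : ∀ j, 1 + β * z j ≠ 0) (v : Equiv.Perm (Fin (M + 1))) :
    G v (z ∘ v) (negOm β ∘ z) =
      ∏ p ∈ valueInversions v, (z p.2 - z p.1) / (1 + β * z p.1) := by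
  induction v using omegaPerm_descending_induction with
  | omega =>
    rw [hG.1, ← prod_staircase_eq_prod_valueInversions fun a b => (z a - z b) / (1 + β * z b)]
    exact Finset.prod_congr rfl fun p _ => add_negOm_add_mul_negOm (hb _)
  | descent v i hv ih =>
    have hlen := permLength_mul_swap_of_descent hv
    have hvanish : G v (z ∘ ⇑(v * τ(i))) (negOm β ∘ z) = 0 :=
      groth_comp_perm_eq_zero (u := v * τ(i)) (v := v) hG hz hb (by omega)
        (by intro h; rw [h] at hlen; omega)
    have hrec := hG.2 v i (z ∘ ⇑(v * τ(i))) (negOm β ∘ z) hlen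
      (apply_castSucc_ne_apply_succ (hz.comp (v * τ(i)).injective) i)
    have hback : (fun j => (z ∘ ⇑(v * τ(i))) (τ(i) j)) = z ∘ v := by
      funext j
      simp
    rw [hrec, hvanish, hback, ih, valueInversions_eq_insert hv,
      Finset.prod_insert notMem_valueInversions_mul_swap]
    have hz_ne : z (v i.succ) - z (v i.castSucc) ≠ 0 := sub_ne_zero.2 (hz.ne hv.ne)
    have hb_ne := hb (v i.succ)
    simp only [Function.comp_apply, Equiv.Perm.mul_apply, Equiv.swap_apply_left,
      Equiv.swap_apply_right]
    field_simp
    ring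

lemma groth_comp_self_ne_zero (hG : IsGroth M β G) {z : Fin (M + 1) → F}
    (hz : Function.Injective z) (hb : ∀ j, 1 + β * z j ≠ 0) (v : Equiv.Perm (Fin (M + 1))) :
    G v (z ∘ v) (negOm β ∘ z) ≠ 0 := by
  rw [groth_comp_self hG hz hb]
  exact Finset.prod_ne_zero_iff.2 fun p hp =>
    div_ne_zero (sub_ne_zero.2 (hz.ne (mem_valueInversions.1 hp).1.ne')) (hb _)

lemma groth_apply_self (hG : IsGroth M β G) {z : Fin (M + 1) → F} (hz : Function.Injective z)
    (hb : ∀ j, 1 + β * z j ≠ 0) (v : Equiv.Perm (Fin (M + 1))) :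
    G v z (negOm β ∘ z) = if v = 1 then 1 else 0 := by
  split_ifs with hv
  · subst hv
    simpa [valueInversions_one] using groth_comp_self hG hz hb 1
  · exact groth_comp_perm_eq_zero (u := 1) hG hz hb (by simp [permLength_one]) (Ne.symm hv)

/-! ### Expansions along the orbit of `z` -/

/-- The coefficients `c` express `f` as a combination of the double Grothendieck polynomials
`G_v(·; ⊖z)` at all the points obtained from `z` by permuting coordinates. -/
def IsOrbitExpansion (β : F)
    (G : Equiv.Perm (Fin (M + 1)) → (Fin (M + 1) → F) → (Fin (M + 1) → F) → F)
    (z : Fin (M + 1) → F) (f : (Fin (M + 1) → F) → F) (c : Equiv.Perm (Fin (M + 1)) → F) : Prop :=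
  ∀ u : Equiv.Perm (Fin (M + 1)), f (z ∘ u) = ∑ v, G v (z ∘ u) (negOm β ∘ z) * c v

theorem exists_isOrbitExpansion (hG : IsGroth M β G) {z : Fin (M + 1) → F}
    (hz : Function.Injective z) (hb : ∀ j, 1 + β * z j ≠ 0) (f : (Fin (M + 1) → F) → F) :
    ∃ c, IsOrbitExpansion β G z f c := by
  let A : Matrix (Equiv.Perm (Fin (M + 1))) (Equiv.Perm (Fin (M + 1))) F :=
    Matrix.of fun u v => G v (z ∘ u) (negOm β ∘ z)
  have hA : IsUnit A := isUnit_of_triangular permLength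
    (fun _ _ => groth_comp_perm_eq_zero hG hz hb) (groth_comp_self_ne_zero hG hz hb)
  obtain ⟨c, hc⟩ := Matrix.mulVec_surjective_iff_isUnit.2 hA fun u => f (z ∘ u)
  exact ⟨c, fun u => (congrFun hc u).symm⟩

lemma ddbar_groth_of_descent (hG : IsGroth M β G) {v : Equiv.Perm (Fin (M + 1))} {i : Fin M}
    (hv : v i.succ < v i.castSucc) {x : Fin (M + 1) → F} (hx : x i.castSucc ≠ x i.succ)
    (y : Fin (M + 1) → F) :
    ddbar β i (fun x => G v x y) x = G (v * τ(i)) x y + β * G v x y := by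
  rw [hG.2 v i x y (permLength_mul_swap_of_descent hv) hx, ddbar]

-- Here `G_v = ∂_i G_{v s_i}`, and `∂̄_i ∂_i = 0`.
lemma ddbar_groth_of_ascent (hG : IsGroth M β G) {v : Equiv.Perm (Fin (M + 1))} {i : Fin M}
    (hv : v i.castSucc < v i.succ) {x : Fin (M + 1) → F} (hx : x i.castSucc ≠ x i.succ)
    (y : Fin (M + 1) → F) :
    ddbar β i (fun x => G v x y) x = 0 := by
  have hlen : permLength (v * τ(i) * τ(i)) + 1 = permLength (v * τ(i)) := by
    rw [mul_swap_mul_swap, permLength_mul_swap_of_ascent hv]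
  have hrec := hG.2 (v * τ(i)) i x y hlen hx
  have hrec_swap := hG.2 (v * τ(i)) i (fun j => x (τ(i) j)) y hlen (by simpa using hx.symm)
  simp only [mul_swap_mul_swap, Equiv.swap_apply_self, Equiv.swap_apply_left,
    Equiv.swap_apply_right] at hrec hrec_swap
  have hsub : x i.castSucc - x i.succ ≠ 0 := sub_ne_zero.2 hx
  rw [← neg_sub (x i.castSucc), div_neg] at hrec_swap
  rw [ddbar, hrec, hrec_swap]
  field_simp
  ring

/-- The action of `∂̄_i` on the coefficients of an expansion in Grothendieck polynomials. -/
def ddbarCoeff (β : F) (i : Fin M) (c : Equiv.Perm (Fin (M + 1)) → F) :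
    Equiv.Perm (Fin (M + 1)) → F :=
  fun v => if v i.castSucc < v i.succ then c (v * τ(i)) else β * c v

lemma sum_mul_ddbarCoeff (β : F) (i : Fin M) (g c : Equiv.Perm (Fin (M + 1)) → F) :
    ∑ v, g v * ddbarCoeff β i c v =
      ∑ v, (if v i.castSucc < v i.succ then 0 else g (v * τ(i)) + β * g v) * c v := by
  have hsplit (v : Equiv.Perm (Fin (M + 1))) : g v * ddbarCoeff β i c v =
      (if v i.castSucc < v i.succ then g v * c (v * τ(i)) else 0) +
        (if v i.castSucc < v i.succ then 0 else β * g v * c v) := by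
    unfold ddbarCoeff
    split_ifs <;> ring
  simp only [hsplit]
  rw [Finset.sum_add_distrib, ← Equiv.sum_comp (Equiv.mulRight τ(i)), ← Finset.sum_add_distrib]
  refine Finset.sum_congr rfl fun v _ => ?_
  simp only [Equiv.coe_mulRight, Equiv.Perm.mul_apply, Equiv.swap_apply_left,
    Equiv.swap_apply_right, mul_swap_mul_swap]
  rcases ascent_or_descent v i with h | h
  · simp [h, h.not_gt]
  · simp only [h, h.not_gt, if_true, if_false]
    ring

lemma IsOrbitExpansion.ddbar_comp_perm {z : Fin (M + 1) → F} {f : (Fin (M + 1) → F) → F}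
    {c : Equiv.Perm (Fin (M + 1)) → F} (h : IsOrbitExpansion β G z f c) (i : Fin M)
    (u : Equiv.Perm (Fin (M + 1))) :
    ddbar β i f (z ∘ u) = ∑ v, ddbar β i (fun x => G v x (negOm β ∘ z)) (z ∘ u) * c v := by
  have hswap : f (fun j => (z ∘ u) (τ(i) j)) =
      ∑ v, G v (fun j => (z ∘ u) (τ(i) j)) (negOm β ∘ z) * c v := h (u * τ(i))
  simp only [ddbar, h u, hswap, Finset.mul_sum]
  rw [← Finset.sum_sub_distrib, Finset.sum_div, ← Finset.sum_add_distrib]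
  exact Finset.sum_congr rfl fun v _ => by ring

theorem IsOrbitExpansion.ddbar (hG : IsGroth M β G) {z : Fin (M + 1) → F}
    (hz : Function.Injective z) {f : (Fin (M + 1) → F) → F} {c : Equiv.Perm (Fin (M + 1)) → F}
    (h : IsOrbitExpansion β G z f c) (i : Fin M) :
    IsOrbitExpansion β G z (ddbar β i f) (ddbarCoeff β i c) := by
  intro u
  have hx := apply_castSucc_ne_apply_succ (hz.comp u.injective) i
  rw [h.ddbar_comp_perm, sum_mul_ddbarCoeff]
  refine Finset.sum_congr rfl fun v _ => ?_
  rcases ascent_or_descent v i with hv | hv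
  · rw [ddbar_groth_of_ascent hG hv hx, if_pos hv]
  · rw [ddbar_groth_of_descent hG hv hx, if_neg hv.not_gt]

theorem IsOrbitExpansion.ddbarWord_apply (hG : IsGroth M β G) {z : Fin (M + 1) → F}
    (hz : Function.Injective z) (hb : ∀ j, 1 + β * z j ≠ 0) {f : (Fin (M + 1) → F) → F}
    {c : Equiv.Perm (Fin (M + 1)) → F} (h : IsOrbitExpansion β G z f c) {L : List (Fin M)}
    {v : Equiv.Perm (Fin (M + 1))} (hL : IsReducedWord L v) : ddbarWord β L f z = c v := by
  induction L using List.reverseRecOn generalizing v f c with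
  | nil =>
    have hv : v = 1 := by simpa using hL.1.symm
    have hfz : f z = ∑ v, G v z (negOm β ∘ z) * c v := h 1
    simpa [groth_apply_self hG hz hb, ddbarWord, hv] using hfz
  | append_singleton L i ih =>
    obtain ⟨w, hw, hasc, rfl⟩ := exists_isReducedWord_of_append_singleton hL
    calc ddbarWord β (L ++ [i]) f z = ddbarWord β L (_root_.ddbar β i f) z := by simp [ddbarWord]
      _ = ddbarCoeff β i c w := ih (h.ddbar hG hz i) hw
      _ = c (w * τ(i)) := if_pos hasc

/-! ### Interpolation -/

open MvPolynomial

lemma prod_mem_staircase {R : Type*} [CommRing R] {N : ℕ} (a b : Fin N → R) :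
    ∏ p ∈ Finset.univ.filter (fun p : Fin N × Fin N => (p.1 : ℕ) + (p.2 : ℕ) + 2 ≤ N),
      (C (a p.2) + C (b p.2) * X p.1) ∈ staircase R N := by
  refine mem_staircase_iff.2 fun j => ?_
  have hdeg := (degreeOf_prod_le j _ _).trans
    (Finset.sum_le_sum fun (p : Fin N × Fin N)
      (_ : p ∈ Finset.univ.filter (fun p : Fin N × Fin N => (p.1 : ℕ) + (p.2 : ℕ) + 2 ≤ N)) =>
        degreeOf_C_add_C_mul_X_le (a p.2) (b p.2) p.1 j)
  rw [← Finset.card_filter, Finset.filter_filter] at hdeg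
  have hcard : (Finset.univ.filter fun p : Fin N × Fin N =>
      (p.1 : ℕ) + (p.2 : ℕ) + 2 ≤ N ∧ j = p.1).card ≤ (Finset.range (N - 1 - j)).card := by
    refine Finset.card_le_card_of_injOn (fun p => (p.2 : ℕ)) ?_ ?_
    · rintro ⟨k, l⟩ h
      simp only [Finset.coe_filter_univ, Set.mem_ofPred_eq] at h
      obtain ⟨h, rfl⟩ := h
      simp only [Finset.coe_range, Set.mem_Iio]
      omega
    · rintro ⟨k, l⟩ h ⟨k', l'⟩ h' hl
      simp_all [Fin.ext_iff]
  rw [Finset.card_range] at hcard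
  omega

theorem exists_mem_staircase_eval_eq_groth (hG : IsGroth M β G) (y : Fin (M + 1) → F)
    (v : Equiv.Perm (Fin (M + 1))) :
    ∃ P ∈ staircase F (M + 1), ∀ x, Function.Injective x → eval x P = G v x y := by
  induction v using omegaPerm_descending_induction with
  | omega =>
    refine ⟨_, prod_mem_staircase y fun j => 1 + β * y j, fun x _ => ?_⟩
    rw [hG.1, map_prod]
    refine Finset.prod_congr rfl fun p _ => ?_
    simp only [map_add, map_mul, eval_C, eval_X]
    ring
  | descent w i hw ih =>
    obtain ⟨P, hP, hPG⟩ := ih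
    obtain ⟨Q, hQ, hQP⟩ := exists_mem_staircase_X_sub_X_mul_eq β i hP
    refine ⟨Q, hQ, fun x hx => ?_⟩
    have hne := apply_castSucc_ne_apply_succ hx i
    have hswap : G w (fun j => x (τ(i) j)) y = eval (x ∘ τ(i)) P :=
      (hPG _ (hx.comp τ(i).injective)).symm
    have heval := congrArg (eval x) hQP
    simp only [map_mul, map_sub, map_add, map_one, eval_X, eval_C, eval_rename] at heval
    rw [hG.2 w i x y (permLength_mul_swap_of_descent hw) hne, eq_div_iff (sub_ne_zero.2 hne),
      ← hPG x hx, hswap, mul_comm]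
    exact heval

theorem interpolation_formula_general (hG : IsGroth M β G) {x z : Fin (M + 1) → F}
    (hx : Function.Injective x) (hz : Function.Injective z) (hb : ∀ j, 1 + β * z j ≠ 0)
    {P : MvPolynomial (Fin (M + 1)) F} (hP : P ∈ staircase F (M + 1))
    {L : Equiv.Perm (Fin (M + 1)) → List (Fin M)} (hL : ∀ v, IsReducedWord (L v) v) :
    eval x P = ∑ v, G v x (negOm β ∘ z) * ddbarWord β (L v) (fun z' => eval z' P) z := by
  obtain ⟨c, hc⟩ := exists_isOrbitExpansion hG hz hb fun z' => eval z' P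
  choose Q hQ hQG using exists_mem_staircase_eval_eq_groth hG (negOm β ∘ z)
  have heval {p : Fin (M + 1) → F} (hp : Function.Injective p) :
      eval p (P - ∑ v, c v • Q v) = eval p P - ∑ v, G v p (negOm β ∘ z) * c v := by
    simp only [map_sub, map_sum, smul_eval, hQG _ p hp, mul_comm]
  have hzero : P - ∑ v, c v • Q v = 0 := by
    refine eq_zero_of_mem_staircase_of_eval_perm_eq_zero (Submodule.sub_mem _ hP <|
      Submodule.sum_mem _ fun v _ => Submodule.smul_mem _ _ (hQ v)) hz fun u => ?_
    rw [heval (hz.comp u.injective)]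
    exact sub_eq_zero.2 (hc u)
  calc eval x P = ∑ v, G v x (negOm β ∘ z) * c v := by
        rw [← sub_eq_zero, ← heval hx, hzero, map_zero]
    _ = _ := Finset.sum_congr rfl fun v _ => by rw [hc.ddbarWord_apply hG hz hb (hL v)]

end Grothendieck

lemma one_add_algebraMap_mul_ne_zero {R A : Type*} [CommRing R] [Nontrivial R] [CommRing A]
    [Algebra R A] {a : A} (ha : Transcendental R a) (b : R) : 1 + algebraMap R A b * a ≠ 0 := by
  intro h
  have hzero := transcendental_iff.1 ha (1 + Polynomial.C b * Polynomial.X) (by simpa using h)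
  simpa using congrArg (Polynomial.coeff · 0) hzero

/-- **Interpolation formula** (Corollary `interpolation`): with `n = M+1`, let
`L_n(t,β)` be the `ℚ(β,t)`-span of the monomials `x_1^{i_1} ⋯ x_n^{i_n}` with
`0 ≤ i_j ≤ n - j` (the coefficient field `ℚ(β,t) ⊆ F` being realised as
`IntermediateField.adjoin ℚ ({β} ∪ Set.range t)`).  For any `F(x;t,β) ∈ L_n(t,β)`,
`F(x;t,β) = ∑_{v ∈ S_n} G^β_v(x; ⊖z) · ∂̄^β_v F(z;t,β)`,
where `∂̄^β_v` (given by any reduced word of `v`) acts on the `z`-variables. -/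
theorem interpolation_formula [Field F] [CharZero F] (M : ℕ) (β : F)
    (x z t : Fin (M + 1) → F)
    (hβt : AlgebraicIndependent ℚ (Sum.elim (fun _ : Unit => β) t))
    (hxz : AlgebraicIndependent (IntermediateField.adjoin ℚ ({β} ∪ Set.range t))
      (Sum.elim x z))
    (c : ((j : Fin (M + 1)) → Fin (M + 1 - (j : ℕ))) →
      IntermediateField.adjoin ℚ ({β} ∪ Set.range t))
    (G : Equiv.Perm (Fin (M + 1)) → (Fin (M + 1) → F) → (Fin (M + 1) → F) → F)
    (hG : IsGroth M β G)
    (L : Equiv.Perm (Fin (M + 1)) → List (Fin M))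
    (hL : ∀ v, IsReducedWord (L v) v) :
    (∑ d : (j : Fin (M + 1)) → Fin (M + 1 - (j : ℕ)),
        (c d : F) * ∏ j : Fin (M + 1), x j ^ ((d j : ℕ))) =
      ∑ v : Equiv.Perm (Fin (M + 1)),
        G v x (fun j => negOm β (z j)) *
          ddbarWord β (L v)
            (fun z' => ∑ d : (j : Fin (M + 1)) → Fin (M + 1 - (j : ℕ)),
              (c d : F) * ∏ j : Fin (M + 1), z' j ^ ((d j : ℕ))) z := by
  let b : IntermediateField.adjoin ℚ ({β} ∪ Set.range t) :=
    ⟨β, IntermediateField.subset_adjoin _ _ (by simp)⟩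
  simpa [Function.comp_def] using interpolation_formula_general hG
    (hxz.injective.comp Sum.inl_injective) (hxz.injective.comp Sum.inr_injective)
    (fun j => one_add_algebraMap_mul_ne_zero (hxz.transcendental (Sum.inr j)) b)
    (sum_C_mul_prod_X_pow_mem_staircase fun d => (c d : F)) hL
end
end
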